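/- Corollary: Let (V,0) ⊂ (ℂⁿ,0) be a germ of a complex hypersurface and F : (ℂⁿ,0) → (ℂⁿ,0) a germ of a finite holomorphic mapping. If the germ (F⁻¹(V),0), taken with its reduced structure, is smooth, then the germ (V,0) is smooth. -/

import Mathlib

/-!
After composing `F` with a local biholomorphism (`exists_straightening`) the preimage of
`V = {g = 0}` is a coordinate hyperplane `{z_j = 0}`, so `Γ = g ∘ F` is a power of `z_j` times a
unit and `z_j ∂_j Γ = v Γ` with `v` a unit (`exists_log_derivative`). The idea is to push the
logarithmic field `z_j ∂_j` forward along the branched covering `F` by averaging over its fibres.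

The average is a residue pairing. With `J = det dF` and `ψ_x(y) = -∂̄b(y) / (y - x)` for a bump
function `b`, the integral of `∏ᵢ ψ_{xᵢ}(Fᵢ) · H · J̄` over a small ball is holomorphic in `x`
(`analyticAt_pairing`). Since holomorphic pull-backs of compactly supported `∂̄`-exact top forms
integrate to zero (`integral_exact_eq_zero`, from Piola's identity for the adjugate Jacobian), the
kernels `ψ_x` may be replaced by nonnegative approximate identities at `x`. Hence the pairing
with `H J` vanishes when `H` vanishes on the fibre over `x` (`pairing_eq_zero`), while the pairing
with `u J`, for `u` holomorphic and nonzero at `0`, is nonzero at `x = 0`, where it is `u(0)` times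
the pairing with `J` (`pairing_det_ne_zero`). That needs `J ≢ 0`
(`det_jac_not_eventually_zero`): if `J ≡ 0`, there is a nonzero holomorphic field in the kernel of
`dF`; by a Stokes argument every such field is divergence free, also after multiplication by a
function, and hence zero.

Averaging `z_j ∂_j` gives a field `h` near `0` with `h(g) = θ g`, `θ(0) ≠ 0` and `h = 0` on `V`
(`exists_field`). If every `dhᵢ(0)` vanished, then Cauchy's estimates would raise the order of
vanishing of `g` indefinitely, so that `g ≡ 0` (`eventually_eq_zero_of_field`). So some `hᵢ` is a
submersion with `V ⊆ {hᵢ = 0}`, and equality holds by the minimum principle on transverse discs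
(`zero_of_zero_of_submersion`). Thus `hᵢ` is the required defining function.
-/

set_option synthInstance.maxHeartbeats 1000000
set_option maxHeartbeats 1000000
open Filter Topology

noncomputable section

instance germAlgebra (n : ℕ) : Algebra ℂ (Filter.Germ (𝓝 (0 : Fin n → ℂ)) ℂ) :=
  RingHom.toAlgebra ((Filter.Germ.coeRingHom _).comp (Pi.constRingHom (Fin n → ℂ) ℂ))

/-- The ring `𝒪₀` of germs at `0` of holomorphic functions on `ℂⁿ`. -/
def holGerms (n : ℕ) : Subalgebra ℂ (Filter.Germ (𝓝 (0 : Fin n → ℂ)) ℂ) where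
  carrier := {G | ∃ f : (Fin n → ℂ) → ℂ, AnalyticAt ℂ f 0 ∧ G = ↑f}
  mul_mem' := by rintro _ _ ⟨f, hf, rfl⟩ ⟨g, hg, rfl⟩; exact ⟨f * g, hf.mul hg, rfl⟩
  add_mem' := by rintro _ _ ⟨f, hf, rfl⟩ ⟨g, hg, rfl⟩; exact ⟨f + g, hf.add hg, rfl⟩
  algebraMap_mem' := fun c => ⟨fun _ => c, analyticAt_const, rfl⟩

/-- The germ at `0` of an analytic function, as an element of `𝒪₀`. -/
def toO {n : ℕ} (f : (Fin n → ℂ) → ℂ) (hf : AnalyticAt ℂ f 0) : holGerms n :=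
  ⟨(↑f : Filter.Germ (𝓝 (0 : Fin n → ℂ)) ℂ), f, hf, rfl⟩

/-- The Jacobian ideal of `f` in `𝒪₀`. -/
def jacobianIdeal (n : ℕ) (f : (Fin n → ℂ) → ℂ) : Ideal (holGerms n) :=
  Ideal.span {G : holGerms n | ∃ i : Fin n,
    (G : Filter.Germ (𝓝 (0 : Fin n → ℂ)) ℂ) = ↑(fun z => fderiv ℂ f z (Pi.single i 1))}

/-- The Milnor number of `f`. -/
def milnorNumber (n : ℕ) (f : (Fin n → ℂ) → ℂ) : ℕ :=
  Module.finrank ℂ (holGerms n ⧸ jacobianIdeal n f)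

/-- A finite holomorphic map germ `(ℂⁿ,0) → (ℂⁿ,0)`. -/
def IsFiniteMapGerm (n : ℕ) (F : (Fin n → ℂ) → Fin n → ℂ) : Prop :=
  AnalyticAt ℂ F 0 ∧ F 0 = 0 ∧ ∀ᶠ z in 𝓝[≠] (0 : Fin n → ℂ), F z ≠ 0

/-- `V = {f = 0}` has (at worst) an isolated singularity at `0`. -/
def HasIsolatedSingularityAt (n : ℕ) (f : (Fin n → ℂ) → ℂ) : Prop :=
  ∀ᶠ z in 𝓝[≠] (0 : Fin n → ℂ), f z = 0 → fderiv ℂ f z ≠ 0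

/-- A germ of a set `{f = 0}` is smooth at `0` if it admits a holomorphic defining equation
with nonvanishing differential at `0`. -/
def IsSmoothGermZeroSet (n : ℕ) (f : (Fin n → ℂ) → ℂ) : Prop :=
  ∃ p : (Fin n → ℂ) → ℂ, AnalyticAt ℂ p 0 ∧ p 0 = 0 ∧
    (∀ᶠ z in 𝓝 (0 : Fin n → ℂ), (p z = 0 ↔ f z = 0)) ∧ fderiv ℂ p 0 ≠ 0

section

open Complex MeasureTheory Metric
open scoped ComplexConjugate

/-! ### The Cauchy–Riemann operator and integration by parts -/

/-- The Cauchy–Riemann derivative `∂f(v) + i ∂f(iv)` of `f` in direction `v`; this is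
`2 ∂f/∂v̄` in the usual normalisation. -/
def dbar {V : Type*} [NormedAddCommGroup V] [NormedSpace ℂ V] [NormedSpace ℝ V]
    (f : V → ℂ) (z v : V) : ℂ :=
  fderiv ℝ f z v + I * fderiv ℝ f z (I • v)

section dbar
variable {V W : Type*} [NormedAddCommGroup V] [NormedSpace ℂ V] [NormedSpace ℝ V]
  [IsScalarTower ℝ ℂ V] [NormedAddCommGroup W] [NormedSpace ℂ W] [NormedSpace ℝ W]
  [IsScalarTower ℝ ℂ W]

lemma dbar_comp {φ : W → ℂ} {F : V → W} {z : V} (v : V) (hφ : DifferentiableAt ℝ φ (F z))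
    (hF : DifferentiableAt ℂ F z) :
    dbar (fun x => φ (F x)) z v = dbar φ (F z) (fderiv ℂ F z v) := by
  have h := hφ.hasFDerivAt.comp z (hF.hasFDerivAt.restrictScalars ℝ)
  have h' : fderiv ℝ (fun x => φ (F x)) z = _ := h.fderiv
  simp [dbar, h']

lemma dbar_smul (φ : W → ℂ) (y : W) (c : ℂ) (v : W) :
    dbar φ y (c • v) = conj c * dbar φ y v := by
  have e1 : c • v = c.re • v + c.im • (I • v) := by
    have cs : ∀ (a : ℝ) (u : W), (a : ℂ) • u = a • u := fun a u => by
      rw [← algebraMap_smul ℂ a u]; rfl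
    conv_lhs => rw [← Complex.re_add_im c]
    rw [add_smul, mul_smul, cs, cs]
  have e2 : I • (c • v) = c.re • (I • v) - c.im • v := by
    rw [e1, smul_add, smul_comm I c.re v, smul_comm I c.im, ← mul_smul I I, I_mul_I]
    simp [sub_eq_add_neg]
  have ec : conj c = c.re - c.im * I := by
    apply Complex.ext <;> simp
  simp only [dbar, e2]
  rw [e1]
  simp only [map_add, map_sub, map_smul, Complex.real_smul, ec]
  linear_combination (c.im * (fderiv ℝ φ y) (I • v)) * I_sq

lemma dbar_sum (φ : W → ℂ) (y : W) {ι : Type*} (s : Finset ι) (v : ι → W) :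
    dbar φ y (∑ i ∈ s, v i) = ∑ i ∈ s, dbar φ y (v i) := by
  simp [dbar, Finset.smul_sum, map_sum, Finset.sum_add_distrib, Finset.mul_sum]

lemma dbar_mul {f g : V → ℂ} {z : V} (v : V) (hf : DifferentiableAt ℝ f z)
    (hg : DifferentiableAt ℝ g z) :
    dbar (fun x => f x * g x) z v = f z * dbar g z v + g z * dbar f z v := by
  simp only [dbar, fderiv_fun_mul hf hg]
  simp
  ring

lemma dbar_holo {f : V → ℂ} {z : V} (v : V) (hf : DifferentiableAt ℂ f z) :
    dbar f z v = 0 := by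
  have h := (hf.hasFDerivAt.restrictScalars ℝ).fderiv
  simp only [dbar, h]
  simp [← mul_assoc]

lemma dbar_conj {f : V → ℂ} {z : V} (v : V) (hf : DifferentiableAt ℂ f z) :
    dbar (fun x => conj (f x)) z v = 2 * conj (fderiv ℂ f z v) := by
  have h := (Complex.conjCLE.toContinuousLinearMap.hasFDerivAt (x := f z)).comp z
    (hf.hasFDerivAt.restrictScalars ℝ)
  have h' : fderiv ℝ (fun x => conj (f x)) z = _ := h.fderiv
  simp only [dbar, h']
  simp
  ring_nf
  simp
  ring

end dbar

lemma integral_fderiv_eq_zero {n : ℕ} {f : (Fin n → ℂ) → ℂ} (hf : ContDiff ℝ 1 f)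
    (hc : HasCompactSupport f) (v : Fin n → ℂ) : ∫ z, fderiv ℝ f z v = 0 := by
  have hi : Integrable (fun z => fderiv ℝ f z v) :=
    ((hf.continuous_fderiv one_ne_zero).clm_apply continuous_const).integrable_of_hasCompactSupport
      (hc.fderiv_apply (𝕜 := ℝ) v)
  have := integral_mul_fderiv_eq_neg_fderiv_mul_of_integrable (𝕜 := ℂ) (μ := volume)
    (f := fun _ : Fin n → ℂ => (1 : ℂ)) (g := f) (v := v) (by simp) (by simpa using hi)
    (by simpa using hf.continuous.integrable_of_hasCompactSupport hc) (by simp)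
    (fun x _ => hf.differentiable one_ne_zero x)
  simpa using this

/-- Stokes' theorem for the pull-back of a test function `Φ` under a holomorphic map `F`, paired
with a holomorphic function `H` and the conjugate of a holomorphic vector field `w`. -/
theorem integral_conj_field_eq_zero {n : ℕ} {r : ℝ} {F w : (Fin n → ℂ) → Fin n → ℂ}
    {H Φ : (Fin n → ℂ) → ℂ}
    (hF : ∀ z ∈ closedBall 0 r, AnalyticAt ℂ F z) (hH : ∀ z ∈ closedBall 0 r, AnalyticAt ℂ H z)
    (hw : ∀ z ∈ closedBall 0 r, AnalyticAt ℂ w z) (hΦ : ContDiff ℝ 1 Φ)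
    (hs : ∀ z ∈ sphere 0 r, F z ∉ tsupport Φ) :
    ∫ z in ball 0 r, H z * (2 * conj (∑ l, fderiv ℂ w z (Pi.single l 1) l) * Φ (F z)
      + dbar Φ (F z) (fderiv ℂ F z (w z))) = 0 := by
  classical
  set S : Set (Fin n → ℂ) := closedBall 0 r ∩ F ⁻¹' tsupport Φ with hS
  have hFc : ContinuousOn F (closedBall 0 r) := fun z hz => (hF z hz).continuousAt.continuousWithinAt
  have hSc : IsCompact S := (isCompact_closedBall _ _).of_isClosed_subset
    (hFc.preimage_isClosed_of_isClosed isClosed_closedBall (isClosed_tsupport _))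
    Set.inter_subset_left
  have hSb : S ⊆ ball 0 r := by
    rintro z ⟨hz, hz'⟩
    rcases (mem_closedBall.1 hz).lt_or_eq with h | h
    · exact h
    · exact absurd hz' (hs z h)
  let f : Fin n → (Fin n → ℂ) → ℂ := fun l => (ball 0 r).indicator
    (fun z => H z * (conj (w z l) * Φ (F z)))
  have hf0 : ∀ l z, z ∉ S → f l z = 0 := by
    intro l z hz
    by_cases hb : z ∈ ball 0 r
    · have : Φ (F z) = 0 := by
        by_contra h
        exact hz ⟨ball_subset_closedBall hb, subset_tsupport _ h⟩
      simp [f, this]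
    · simp [f, hb]
  have hfc : ∀ l, HasCompactSupport (f l) := fun l =>
    HasCompactSupport.intro hSc (fun z hz => hf0 l z hz)
  have hev : ∀ l, ∀ z ∈ ball (0 : Fin n → ℂ) r,
      f l =ᶠ[𝓝 z] fun z => H z * (conj (w z l) * Φ (F z)) := by
    intro l z hz
    filter_upwards [isOpen_ball.mem_nhds hz] with y hy
    simp only [f, Set.indicator_of_mem hy]
  have hwl : ∀ l, ∀ z ∈ closedBall 0 r, AnalyticAt ℂ (fun z => w z l) z := by
    intro l z hz
    exact (ContinuousLinearMap.proj (R := ℂ) (φ := fun _ : Fin n => ℂ) l).analyticAt _ |>.comp (hw z hz)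
  have hfd : ∀ l, ContDiff ℝ 1 (f l) := by
    intro l
    rw [contDiff_iff_contDiffAt]
    intro z
    by_cases hz : z ∈ ball 0 r
    · have hz' := ball_subset_closedBall hz
      refine ContDiffAt.congr_of_eventuallyEq ?_ (hev l z hz)
      refine ((hH z hz').contDiffAt.restrict_scalars ℝ).mul (ContDiffAt.mul ?_ ?_)
      · exact Complex.conjCLE.contDiff.contDiffAt.comp z ((hwl l z hz').contDiffAt.restrict_scalars ℝ)
      · exact hΦ.contDiffAt.comp z ((hF z hz').contDiffAt.restrict_scalars ℝ)
    · have : f l =ᶠ[𝓝 z] fun _ => 0 := by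
        filter_upwards [hSc.isClosed.isOpen_compl.mem_nhds (fun h => hz (hSb h))] with y hy
        exact hf0 l y hy
      exact contDiffAt_const.congr_of_eventuallyEq this
  have hintegr : ∀ l v, Integrable (fun z => fderiv ℝ (f l) z v) := fun l v =>
    (((hfd l).continuous_fderiv one_ne_zero).clm_apply
      continuous_const).integrable_of_hasCompactSupport ((hfc l).fderiv_apply (𝕜 := ℝ) v)
  have hzero : ∫ z, ∑ l, dbar (f l) z (Pi.single l 1) = 0 := by
    rw [integral_finsetSum]
    · refine Finset.sum_eq_zero fun l _ => ?_
      simp only [dbar]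
      rw [integral_add (hintegr _ _) ((hintegr _ _).const_mul _), integral_const_mul,
        integral_fderiv_eq_zero (hfd l) (hfc l), integral_fderiv_eq_zero (hfd l) (hfc l)]
      simp
    · intro l _
      exact (hintegr _ _).add ((hintegr _ _).const_mul _)
  have houts : ∀ z, z ∉ ball 0 r → ∑ l, dbar (f l) z (Pi.single l 1) = 0 := by
    intro z hz
    refine Finset.sum_eq_zero fun l _ => ?_
    have : f l =ᶠ[𝓝 z] fun _ => 0 := by
      filter_upwards [hSc.isClosed.isOpen_compl.mem_nhds (fun h => hz (hSb h))] with y hy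
      exact hf0 l y hy
    simp [dbar, this.fderiv_eq]
  rw [← setIntegral_eq_integral_of_forall_compl_eq_zero houts] at hzero
  rw [← hzero]
  refine setIntegral_congr_fun measurableSet_ball fun z hz => ?_
  have hz' := ball_subset_closedBall hz
  have hwsum : w z = ∑ l, w z l • (Pi.single l (1 : ℂ) : Fin n → ℂ) := by
    ext i; simp [Finset.sum_apply, Pi.single_apply]
  have key : ∀ l, dbar (f l) z (Pi.single l 1) = H z * (2 * conj (fderiv ℂ w z (Pi.single l 1) l)
      * Φ (F z) + dbar Φ (F z) (fderiv ℂ F z (w z l • Pi.single l 1))) := by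
    intro l
    have hdw := (hwl l z hz').differentiableAt
    have hdF := (hF z hz').differentiableAt
    have hdH := (hH z hz').differentiableAt
    have hdΦ := hΦ.differentiable one_ne_zero (F z)
    have hd1 : DifferentiableAt ℝ (fun z => conj (w z l)) z :=
      (Complex.conjCLE.differentiable _).comp z (hdw.restrictScalars ℝ)
    have hd2 : DifferentiableAt ℝ (fun z => Φ (F z)) z := hdΦ.comp z (hdF.restrictScalars ℝ)
    have h1 : dbar (f l) z (Pi.single l 1) =
        dbar (fun z => H z * (conj (w z l) * Φ (F z))) z (Pi.single l 1) := by
      simp only [dbar, (hev l z hz).fderiv_eq]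
    have h2 : fderiv ℂ (fun z => w z l) z (Pi.single l 1) = fderiv ℂ w z (Pi.single l 1) l := by
      rw [fderiv_apply (hw z hz').differentiableAt]
      rfl
    rw [h1, dbar_mul _ (hdH.restrictScalars ℝ) (hd1.fun_mul hd2), dbar_holo _ hdH, dbar_mul _ hd1 hd2,
      dbar_conj _ hdw, dbar_comp _ hdΦ hdF, h2, map_smul, dbar_smul]
    ring
  simp only [key]
  conv_lhs => rw [hwsum]
  rw [map_sum (fderiv ℂ F z), dbar_sum, ← Finset.mul_sum, Finset.sum_add_distrib, map_sum,
    Finset.mul_sum, Finset.sum_mul]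

/-! ### Jacobian matrices and the Piola identity -/

/-- The Jacobian matrix of `F`: its entry `(m, l)` is `∂F_m/∂z_l`. -/
def jac {n : ℕ} (F : (Fin n → ℂ) → Fin n → ℂ) (z : Fin n → ℂ) : Matrix (Fin n) (Fin n) ℂ :=
  Matrix.of fun m l => fderiv ℂ F z (Pi.single l 1) m

/-- The determinant as a continuous multilinear function of the rows. -/
def detC (n : ℕ) : ContinuousMultilinearMap ℂ (fun _ : Fin n => Fin n → ℂ) ℂ :=
  { (Matrix.detRowAlternating (n := Fin n) (R := ℂ)).toMultilinearMap with
    cont := by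
      change Continuous fun M : Matrix (Fin n) (Fin n) ℂ => M.det
      exact Continuous.matrix_det continuous_id }

lemma detC_apply {n : ℕ} (M : Fin n → Fin n → ℂ) : detC n M = Matrix.det (Matrix.of M) := rfl

lemma analyticAt_jac_row {n : ℕ} {F : (Fin n → ℂ) → Fin n → ℂ} {z : Fin n → ℂ}
    (hF : AnalyticAt ℂ F z) (m : Fin n) : AnalyticAt ℂ (fun z => jac F z m) z := by
  refine AnalyticAt.pi fun l => ?_
  have h1 : AnalyticAt ℂ (fun z => fderiv ℂ F z (Pi.single l 1)) z :=
    ((ContinuousLinearMap.apply ℂ (Fin n → ℂ) (Pi.single l 1 : Fin n → ℂ)).analyticAt _).comp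
      hF.fderiv
  exact ((ContinuousLinearMap.proj (R := ℂ) (φ := fun _ : Fin n => ℂ) m).analyticAt _).comp h1

lemma analyticAt_det_jac {n : ℕ} {F : (Fin n → ℂ) → Fin n → ℂ} {z : Fin n → ℂ}
    (hF : AnalyticAt ℂ F z) : AnalyticAt ℂ (fun z => (jac F z).det) z :=
  AnalyticAt.comp (g := detC n) (f := fun z m => jac F z m) (detC n).analyticAt
    (AnalyticAt.pi fun m => analyticAt_jac_row hF m)

lemma adjugate_jac {n : ℕ} (F : (Fin n → ℂ) → Fin n → ℂ) (z : Fin n → ℂ) (l j : Fin n) :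
    (jac F z).adjugate l j = detC n fun i =>
      if i = j then Pi.single l 1 else jac F z i := by
  rw [Matrix.adjugate_apply, detC_apply]
  congr 1
  ext i k
  by_cases h : i = j
  · subst h; simp
  · simp [h]

lemma analyticAt_adjugate_jac {n : ℕ} {F : (Fin n → ℂ) → Fin n → ℂ} {z : Fin n → ℂ}
    (hF : AnalyticAt ℂ F z) (j : Fin n) :
    AnalyticAt ℂ (fun z => fun l => (jac F z).adjugate l j) z := by
  refine AnalyticAt.pi fun l => ?_
  simp only [adjugate_jac]
  refine AnalyticAt.comp (g := detC n)
    (f := fun z i => if i = j then Pi.single l 1 else jac F z i) (detC n).analyticAt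
    (AnalyticAt.pi fun m => ?_)
  by_cases h : m = j
  · simp only [h, if_true]; exact analyticAt_const
  · simp only [h, if_false]; exact analyticAt_jac_row hF m

lemma fderiv_jac_row {n : ℕ} {F : (Fin n → ℂ) → Fin n → ℂ} {z : Fin n → ℂ}
    (hF : AnalyticAt ℂ F z) (m l : Fin n) (v : Fin n → ℂ) :
    fderiv ℂ (fun z => jac F z m) z v l = fderiv ℂ (fderiv ℂ F) z v (Pi.single l 1) m := by
  have hd := hF.fderiv.differentiableAt
  have h1 := ((ContinuousLinearMap.apply ℂ (Fin n → ℂ) (Pi.single l 1 : Fin n → ℂ)).hasFDerivAt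
    (x := fderiv ℂ F z)).comp z hd.hasFDerivAt
  have h2 := ((ContinuousLinearMap.proj (R := ℂ) (φ := fun _ : Fin n => ℂ) m).hasFDerivAt
    (x := fderiv ℂ F z (Pi.single l 1))).comp z h1
  have h3 := (analyticAt_jac_row hF m).differentiableAt
  have h4 := fderiv_apply h3 l
  have h5 : fderiv ℂ (fun z => jac F z m l) z = _ := h2.fderiv
  have h6 : fderiv ℂ (fun z => jac F z m) z v l = fderiv ℂ (fun z => jac F z m l) z v := by
    rw [h4]; rfl
  rw [h6, h5]
  rfl

/-- Piola's identity: the columns of the adjugate of a Jacobian matrix are divergence free. -/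
lemma piola {n : ℕ} {F : (Fin n → ℂ) → Fin n → ℂ} {z : Fin n → ℂ}
    (hF : AnalyticAt ℂ F z) (j : Fin n) :
    ∑ l, fderiv ℂ (fun z => fun l => (jac F z).adjugate l j) z (Pi.single l 1) l = 0 := by
  let R : Fin n → Fin n → ℂ := fun i => jac F z i
  let s : Fin n → Fin n → Fin n → ℂ := fun i l k =>
    fderiv ℂ (fderiv ℂ F) z (Pi.single l 1) (Pi.single k 1) i
  have hsymm : ∀ i l k, s i l k = s i k l := by
    intro i l k
    have h := (hF.contDiffAt (n := 2)).isSymmSndFDerivAt (by simp)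
    exact congrFun (h.eq (Pi.single l 1) (Pi.single k 1)) i
  let B : Fin n → Fin n → Fin n → ℂ := fun i l k => detC n
    (Function.update (Function.update R j (Pi.single l 1)) i (Pi.single k 1))
  have hanti : ∀ i, i ≠ j → ∀ l k, B i l k = - B i k l := by
    intro i hij l k
    have h := (Matrix.detRowAlternating (n := Fin n) (R := ℂ)).map_swap
      (Function.update (Function.update R j (Pi.single k 1)) i (Pi.single l 1)) hij
    have h2 : (Function.update (Function.update R j (Pi.single k 1)) i (Pi.single l 1))
        ∘ Equiv.swap i j =
        Function.update (Function.update R j (Pi.single l 1)) i (Pi.single k 1) := by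
      funext m
      by_cases hm : m = i
      · subst hm; simp [hij.symm]
      · by_cases hm' : m = j
        · subst hm'; simp [hij.symm]
        · simp [Equiv.swap_apply_of_ne_of_ne hm hm', hm, hm']
    rw [h2] at h
    exact h
  have hder : ∀ l, fderiv ℂ (fun z => fun l => (jac F z).adjugate l j) z (Pi.single l 1) l =
      ∑ i, if i = j then 0 else ∑ k, s i l k * B i l k := by
    intro l
    have h1 : fderiv ℂ (fun z => fun l => (jac F z).adjugate l j) z (Pi.single l 1) l =
        fderiv ℂ (fun z => (jac F z).adjugate l j) z (Pi.single l 1) := by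
      rw [fderiv_apply (analyticAt_adjugate_jac hF j).differentiableAt l]; rfl
    rw [h1]
    have hg : ∀ i, HasFDerivAt (fun z => if i = j then (Pi.single l 1 : Fin n → ℂ) else jac F z i)
        (if i = j then 0 else fderiv ℂ (fun z => jac F z i) z) z := by
      intro i
      by_cases h : i = j
      · simp only [h, if_true]; exact hasFDerivAt_const _ _
      · simp only [h, if_false]; exact (analyticAt_jac_row hF i).differentiableAt.hasFDerivAt
    have h2 := HasFDerivAt.multilinear_comp (detC n) hg
    simp only [adjugate_jac]
    rw [h2.fderiv]
    simp only [_root_.sum_apply, ContinuousLinearMap.comp_apply]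
    refine Finset.sum_congr rfl fun i _ => ?_
    by_cases h : i = j
    · simp only [h, if_true, _root_.zero_apply]
      exact (detC n).map_update_zero _ _
    · simp only [h, if_false]
      have h3 : (fderiv ℂ (fun z => jac F z i) z) (Pi.single l 1) =
          ∑ k, s i l k • (Pi.single k (1 : ℂ) : Fin n → ℂ) := by
        ext k
        rw [fderiv_jac_row hF]
        simp [s, Finset.sum_apply, Pi.single_apply]
      rw [h3, map_sum]
      refine Finset.sum_congr rfl fun k _ => ?_
      rw [map_smul, smul_eq_mul]
      congr 1
      change detC n (Function.update _ i _) = detC n _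
      congr 1
      congr 1
      funext m
      by_cases hm : m = j
      · subst hm; simp
      · simp [hm, R]
  simp only [hder]
  rw [Finset.sum_comm]
  refine Finset.sum_eq_zero fun i _ => ?_
  by_cases h : i = j
  · simp [h]
  simp only [h, if_false]
  have h4 : ∑ l, ∑ k, s i l k * B i l k = - ∑ l, ∑ k, s i l k * B i l k := by
    conv_lhs => rw [Finset.sum_comm]
    rw [← Finset.sum_neg_distrib]
    refine Finset.sum_congr rfl fun l _ => ?_
    rw [← Finset.sum_neg_distrib]
    refine Finset.sum_congr rfl fun k _ => ?_
    rw [hsymm i k l, hanti i h k l, mul_neg]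
  exact self_eq_neg.1 h4

lemma fderiv_eq_jac_mulVec {n : ℕ} (F : (Fin n → ℂ) → Fin n → ℂ) (z v : Fin n → ℂ) :
    fderiv ℂ F z v = (jac F z).mulVec v := by
  have hv : v = ∑ l, v l • (Pi.single l (1 : ℂ) : Fin n → ℂ) := by
    ext i; simp [Finset.sum_apply, Pi.single_apply]
  conv_lhs => rw [hv]
  ext m
  simp [map_sum, Matrix.mulVec, dotProduct, jac, Finset.sum_apply, mul_comm]

/-- The residue pairing `H ↦ ∫ (Φ ∘ F) H J̄` annihilates `∂̄`-exact kernels `Φ = ∂̄_j Θ`. -/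
theorem integral_exact_eq_zero {n : ℕ} {r : ℝ} {F : (Fin n → ℂ) → Fin n → ℂ}
    {H Θ : (Fin n → ℂ) → ℂ}
    (hF : ∀ z ∈ closedBall 0 r, AnalyticAt ℂ F z) (hH : ∀ z ∈ closedBall 0 r, AnalyticAt ℂ H z)
    (hΘ : ContDiff ℝ 1 Θ) (hs : ∀ z ∈ sphere 0 r, F z ∉ tsupport Θ) (j : Fin n) :
    ∫ z in ball 0 r, dbar Θ (F z) (Pi.single j 1) * H z * conj (jac F z).det = 0 := by
  rw [← integral_conj_field_eq_zero (w := fun z l => (jac F z).adjugate l j) hF hH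
    (fun z hz => analyticAt_adjugate_jac (hF z hz) j) hΘ hs]
  refine setIntegral_congr_fun measurableSet_ball fun z hz => ?_
  have hz' := ball_subset_closedBall hz
  have h1 : fderiv ℂ F z (fun l => (jac F z).adjugate l j) =
      (jac F z).det • (Pi.single j 1 : Fin n → ℂ) := by
    rw [fderiv_eq_jac_mulVec]
    ext m
    have := congrFun (congrFun (Matrix.mul_adjugate (jac F z)) m) j
    simp only [Matrix.mul_apply] at this
    simp only [Matrix.mulVec, dotProduct]
    rw [this]
    simp [Matrix.one_apply, Pi.single_apply]
  simp only [piola (hF z hz') j, h1, dbar_smul]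
  simp
  ring

/-! ### The Jacobian determinant of a finite germ -/

/-- Two germs of holomorphic functions whose product vanishes: one of them vanishes. -/
lemma eventually_zero_or_of_mul {n : ℕ} {f g : (Fin n → ℂ) → ℂ} (hf : AnalyticAt ℂ f 0)
    (hg : AnalyticAt ℂ g 0) (h : ∀ᶠ z in 𝓝 (0 : Fin n → ℂ), f z * g z = 0) :
    (∀ᶠ z in 𝓝 (0 : Fin n → ℂ), f z = 0) ∨ ∀ᶠ z in 𝓝 (0 : Fin n → ℂ), g z = 0 := by
  obtain ⟨r, hr, hb⟩ := Metric.eventually_nhds_iff_ball.1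
    (hf.eventually_analyticAt.and (hg.eventually_analyticAt.and h))
  by_cases hfz : ∀ z ∈ ball (0 : Fin n → ℂ) r, f z = 0
  · left
    filter_upwards [ball_mem_nhds _ hr] with z hz using hfz z hz
  · right
    push Not at hfz
    obtain ⟨z, hz, hne⟩ := hfz
    have hev : g =ᶠ[𝓝 z] 0 := by
      filter_upwards [(hb z hz).1.continuousAt.eventually_ne hne, isOpen_ball.mem_nhds hz]
        with y hy hy'
      exact (mul_eq_zero.1 (hb y hy').2.2).resolve_left hy
    have := AnalyticOnNhd.eqOn_zero_of_preconnected_of_eventuallyEq_zero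
      (fun y hy => (hb y hy).2.1) (convex_ball (0 : Fin n → ℂ) r).isPreconnected hz hev
    filter_upwards [ball_mem_nhds _ hr] with y hy using this hy

instance holGermsNoZeroDivisors (n : ℕ) : NoZeroDivisors (holGerms n) where
  eq_zero_or_eq_zero_of_mul_eq_zero := by
    rintro ⟨_, f, hf, rfl⟩ ⟨_, g, hg, rfl⟩ h
    have h' : ((fun z => f z * g z : (Fin n → ℂ) → ℂ) : Germ (𝓝 (0 : Fin n → ℂ)) ℂ) =
      ((fun _ => 0 : (Fin n → ℂ) → ℂ) : Germ (𝓝 (0 : Fin n → ℂ)) ℂ) := congrArg Subtype.val h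
    rcases eventually_zero_or_of_mul hf hg (Germ.coe_eq.1 h') with h1 | h1
    · left; exact Subtype.ext (Germ.coe_eq.2 h1)
    · right; exact Subtype.ext (Germ.coe_eq.2 h1)

instance holGermsNontrivial (n : ℕ) : Nontrivial (holGerms n) where
  exists_pair_ne := by
    refine ⟨0, 1, fun h => ?_⟩
    have h' : ((fun _ => 0 : (Fin n → ℂ) → ℂ) : Germ (𝓝 (0 : Fin n → ℂ)) ℂ) =
      ((fun _ => 1 : (Fin n → ℂ) → ℂ) : Germ (𝓝 (0 : Fin n → ℂ)) ℂ) := congrArg Subtype.val h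
    have := (Germ.coe_eq.1 h').self_of_nhds
    simp at this

instance holGermsIsDomain (n : ℕ) : IsDomain (holGerms n) := NoZeroDivisors.to_isDomain _

lemma exists_radius {n : ℕ} {F : (Fin n → ℂ) → Fin n → ℂ} (hF : IsFiniteMapGerm n F)
    {P : (Fin n → ℂ) → Prop} (hP : ∀ᶠ z in 𝓝 0, P z) :
    ∃ r > 0, ∀ z ∈ closedBall 0 r, AnalyticAt ℂ F z ∧ P z ∧ (z ≠ 0 → F z ≠ 0) := by
  have h := eventually_nhdsWithin_iff.1 hF.2.2
  obtain ⟨r, hr, hb⟩ := Metric.eventually_nhds_iff_ball.1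
    (hF.1.eventually_analyticAt.and (hP.and h))
  exact ⟨r / 2, half_pos hr, fun z hz =>
    hb z (closedBall_subset_ball (half_lt_self hr) hz)⟩

lemma exists_sphere_bound {n : ℕ} {F : (Fin n → ℂ) → Fin n → ℂ} {r : ℝ} (hr : 0 < r)
    (hF : ∀ z ∈ closedBall 0 r, AnalyticAt ℂ F z) (h0 : ∀ z ∈ closedBall 0 r, z ≠ 0 → F z ≠ 0) :
    ∃ δ > 0, ∀ z ∈ sphere 0 r, δ ≤ ‖F z‖ := by
  rcases (sphere (0 : Fin n → ℂ) r).eq_empty_or_nonempty with h | h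
  · exact ⟨1, one_pos, by simp [h]⟩
  · obtain ⟨z, hz, hm⟩ := (isCompact_sphere (0 : Fin n → ℂ) r).exists_isMinOn h
      (f := fun z => ‖F z‖)
      (fun z hz => ((hF z (sphere_subset_closedBall hz)).continuousAt.norm).continuousWithinAt)
    refine ⟨‖F z‖, norm_pos_iff.2 (h0 z (sphere_subset_closedBall hz) ?_), fun y hy => hm hy⟩
    rintro rfl
    simp at hz
    exact hr.ne hz

lemma eq_zero_of_setIntegral_ball {n : ℕ} {r : ℝ} {u : (Fin n → ℂ) → ℝ}
    (hc : ContinuousOn u (closedBall 0 r)) (hu : ∀ z ∈ ball 0 r, 0 ≤ u z)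
    (h : ∫ z in ball 0 r, u z = 0) : ∀ z ∈ ball 0 r, u z = 0 := by
  have hi : IntegrableOn u (ball 0 r) :=
    (hc.integrableOn_compact (isCompact_closedBall _ _)).mono_set ball_subset_closedBall
  have h1 := (setIntegral_eq_zero_iff_of_nonneg_ae
    ((ae_restrict_iff' measurableSet_ball).2 (Eventually.of_forall hu)) hi).1 h
  exact Measure.eqOn_open_of_ae_eq h1 isOpen_ball (hc.mono ball_subset_closedBall)
    continuousOn_const

lemma analyticAt_div {n : ℕ} {w : (Fin n → ℂ) → Fin n → ℂ} {z : Fin n → ℂ}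
    (hw : AnalyticAt ℂ w z) :
    AnalyticAt ℂ (fun z => ∑ l, fderiv ℂ w z (Pi.single l 1) l) z := by
  refine Finset.analyticAt_fun_sum _ fun l _ => ?_
  have : AnalyticAt ℂ (fun z => jac w z l l) z :=
    ((ContinuousLinearMap.proj (R := ℂ) (φ := fun _ : Fin n => ℂ) l).analyticAt _).comp
      (analyticAt_jac_row hw l)
  exact this

/-- A holomorphic vector field tangent to the fibres of a finite germ is divergence free. -/
lemma div_eq_zero {n : ℕ} {F w : (Fin n → ℂ) → Fin n → ℂ} (hF : IsFiniteMapGerm n F)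
    (hw : AnalyticAt ℂ w 0) (h0 : ∀ᶠ z in 𝓝 0, fderiv ℂ F z (w z) = 0) :
    ∀ᶠ z in 𝓝 0, ∑ l, fderiv ℂ w z (Pi.single l 1) l = 0 := by
  obtain ⟨r, hr, hb⟩ := exists_radius hF (hw.eventually_analyticAt.and h0)
  obtain ⟨δ, hδ, hsph⟩ := exists_sphere_bound hr (fun z hz => (hb z hz).1)
    (fun z hz => (hb z hz).2.2)
  let b : ContDiffBump (0 : Fin n → ℂ) := ⟨δ / 4, δ / 2, by positivity, by linarith⟩
  set D : (Fin n → ℂ) → ℂ := fun z => ∑ l, fderiv ℂ w z (Pi.single l 1) l with hD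
  have hΦ : ContDiff ℝ 1 (fun y => (b y : ℂ)) := ofRealCLM.contDiff.comp b.contDiff
  have hDa : ∀ z ∈ closedBall 0 r, AnalyticAt ℂ D z := fun z hz => analyticAt_div (hb z hz).2.1.1
  have key := integral_conj_field_eq_zero (H := D) (fun z hz => (hb z hz).1) hDa
    (fun z hz => (hb z hz).2.1.1) hΦ (by
      intro z hz hmem
      have h1 : tsupport (fun y => (b y : ℂ)) ⊆ tsupport b :=
        closure_mono fun y hy hy' => hy (by simp [hy'])
      have h2 := h1 hmem
      rw [b.tsupport_eq, mem_closedBall_zero_iff] at h2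
      have := hsph z hz
      change _ ≤ δ / 2 at h2
      linarith)
  have hre : ∫ z in ball 0 r, (2 * ‖D z‖ ^ 2 * b (F z)) = 0 := by
    rw [← Complex.ofReal_inj, ← integral_complex_ofReal, Complex.ofReal_zero, ← key]
    refine setIntegral_congr_fun measurableSet_ball fun z hz => ?_
    have h1 := (hb z (ball_subset_closedBall hz)).2.1.2
    simp only [h1]
    have h2 := Complex.mul_conj' (D z)
    simp only [dbar, smul_zero, map_zero, mul_zero, add_zero]
    push_cast
    rw [← h2]
    change _ = D z * (2 * conj (D z) * _)
    ring
  have hz0 := eq_zero_of_setIntegral_ball (u := fun z => 2 * ‖D z‖ ^ 2 * b (F z)) (by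
    intro z hz
    have h1 := (hDa z hz).continuousAt
    have h2 : ContinuousAt (fun z => b (F z)) z :=
      ContinuousAt.comp (g := b) b.continuous.continuousAt (hb z hz).1.continuousAt
    exact (((h1.norm.pow 2).const_mul 2).mul h2).continuousWithinAt)
    (fun z _ => by have := b.nonneg (x := F z); positivity) hre
  have hFc := hF.1.continuousAt
  have hev : ∀ᶠ z in 𝓝 0, F z ∈ ball (0 : Fin n → ℂ) (δ / 2) :=
    hFc.eventually_mem (by rw [hF.2.1]; exact ball_mem_nhds _ (half_pos hδ))
  filter_upwards [hev, ball_mem_nhds _ hr] with z hz hzr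
  have h1 := hz0 z hzr
  have h2 := b.pos_of_mem_ball hz
  simpa [h2.ne'] using h1

/-- The differential of a finite germ has no holomorphic kernel field. -/
lemma field_eq_zero {n : ℕ} {F w : (Fin n → ℂ) → Fin n → ℂ} (hF : IsFiniteMapGerm n F)
    (hw : AnalyticAt ℂ w 0) (h0 : ∀ᶠ z in 𝓝 0, fderiv ℂ F z (w z) = 0) :
    ∀ᶠ z in 𝓝 0, w z = 0 := by
  have hm : ∀ m : Fin n, ∀ᶠ z in 𝓝 0, w z m = 0 := by
    intro m
    have hp : ∀ z : Fin n → ℂ, AnalyticAt ℂ (fun z : Fin n → ℂ => z m) z := fun z =>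
      (ContinuousLinearMap.proj (R := ℂ) (φ := fun _ : Fin n => ℂ) m).analyticAt z
    have h2 := div_eq_zero (w := fun z => z m • w z) hF ((hp 0).smul hw) (by
      filter_upwards [h0] with z hz
      rw [map_smul, hz, smul_zero])
    filter_upwards [h2, div_eq_zero hF hw h0, hw.eventually_analyticAt] with z hz1 hz2 hz3
    have hd : ∀ v : Fin n → ℂ, fderiv ℂ (fun z => z m • w z) z v =
        z m • fderiv ℂ w z v + v m • w z := by
      intro v
      rw [fderiv_fun_smul (hp z).differentiableAt hz3.differentiableAt]
      have : fderiv ℂ (fun z : Fin n → ℂ => z m) z =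
        ContinuousLinearMap.proj (R := ℂ) (φ := fun _ : Fin n => ℂ) m :=
        (ContinuousLinearMap.proj (R := ℂ) (φ := fun _ : Fin n => ℂ) m).fderiv
      simp [this]
    simp only [hd, Pi.add_apply, Pi.smul_apply, Finset.sum_add_distrib, smul_eq_mul,
      ← Finset.mul_sum, hz2, mul_zero, zero_add] at hz1
    simpa [Pi.single_apply] using hz1
  filter_upwards [eventually_all.2 hm] with z hz
  exact funext hz

/-- The Jacobian determinant of a finite germ does not vanish identically. -/
theorem det_jac_not_eventually_zero {n : ℕ} {F : (Fin n → ℂ) → Fin n → ℂ}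
    (hF : IsFiniteMapGerm n F) : ¬ ∀ᶠ z in 𝓝 0, (jac F z).det = 0 := by
  intro hdet
  have hent : ∀ m l, AnalyticAt ℂ (fun z => jac F z m l) 0 := fun m l =>
    ((ContinuousLinearMap.proj (R := ℂ) (φ := fun _ : Fin n => ℂ) l).analyticAt _).comp
      (analyticAt_jac_row hF.1 m)
  let M : Matrix (Fin n) (Fin n) (holGerms n) := Matrix.of fun m l => toO _ (hent m l)
  let A : Matrix (Fin n) (Fin n) ((Fin n → ℂ) → ℂ) := Matrix.of fun m l z => jac F z m l
  have hA : A.det = fun z => (jac F z).det := by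
    funext z
    have := RingHom.map_det (Pi.evalRingHom (fun _ : Fin n → ℂ => ℂ) z) A
    exact this
  have hM : M.det = 0 := by
    apply Subtype.ext
    have h1 := RingHom.map_det (holGerms n).val.toRingHom M
    have h2 := RingHom.map_det (Germ.coeRingHom (𝓝 (0 : Fin n → ℂ)) (R := ℂ)) A
    have h3 : (holGerms n).val.toRingHom.mapMatrix M =
      (Germ.coeRingHom (𝓝 (0 : Fin n → ℂ)) (R := ℂ)).mapMatrix A := rfl
    rw [h3, ← h2, hA] at h1
    refine h1.trans (Germ.coe_eq.2 hdet)
  obtain ⟨v, hv, hMv⟩ := Matrix.exists_mulVec_eq_zero_iff.2 hM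
  choose f hf hfv using fun l => (v l).2
  apply hv
  have hw : AnalyticAt ℂ (fun z l => f l z) 0 := AnalyticAt.pi fun l => hf l
  have := field_eq_zero hF hw (by
    have hrow : ∀ m, ∀ᶠ z in 𝓝 0, fderiv ℂ F z (fun l => f l z) m = 0 := by
      intro m
      have h1 : ((∑ l, M m l * v l : holGerms n) : Germ (𝓝 (0 : Fin n → ℂ)) ℂ) = 0 :=
        congrArg Subtype.val (congrFun hMv m)
      have h2 : ((∑ l, M m l * v l : holGerms n) : Germ (𝓝 (0 : Fin n → ℂ)) ℂ) =
          Germ.coeRingHom (𝓝 (0 : Fin n → ℂ)) (∑ l, A m l * f l) := by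
        rw [map_sum, AddSubmonoidClass.coe_finsetSum]
        refine Finset.sum_congr rfl fun l _ => ?_
        rw [map_mul]
        change (M m l : Germ (𝓝 (0 : Fin n → ℂ)) ℂ) * (v l : Germ (𝓝 (0 : Fin n → ℂ)) ℂ) = _
        rw [hfv l]
        rfl
      have h3 : (Germ.coeRingHom (𝓝 (0 : Fin n → ℂ)) (∑ l, A m l * f l)) = 0 := h2.symm.trans h1
      filter_upwards [Germ.coe_eq.1 h3] with z hz
      rw [fderiv_eq_jac_mulVec]
      simpa [Matrix.mulVec, dotProduct, A, Finset.sum_apply] using hz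
    filter_upwards [eventually_all.2 hrow] with z hz
    exact funext hz)
  funext l
  apply Subtype.ext
  rw [hfv l]
  refine Germ.coe_eq.2 ?_
  filter_upwards [this] with z hz
  exact congrFun hz l

/-! ### Kernels in one variable -/

/-- Test functions on `ℂ` supported in the closed disc of radius `ρ`. -/
def IsKernel (ρ : ℝ) (φ : ℂ → ℂ) : Prop := ContDiff ℝ 1 φ ∧ ∀ y, ρ < ‖y‖ → φ y = 0

lemma hasDerivAt_max_pow (m : ℕ) (s : ℝ) :
    HasDerivAt (fun s : ℝ => max 0 s ^ (m + 2)) ((m + 2) * max 0 s ^ (m + 1)) s := by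
  rcases lt_trichotomy s 0 with h | rfl | h
  · have : (fun s : ℝ => max 0 s ^ (m + 2)) =ᶠ[𝓝 s] fun _ => 0 := by
      filter_upwards [gt_mem_nhds h] with t ht
      simp [max_eq_left ht.le]
    rw [max_eq_left h.le]
    simpa using (hasDerivAt_const s (0 : ℝ)).congr_of_eventuallyEq this
  · rw [hasDerivAt_iff_isLittleO_nhds_zero]
    simp only [zero_add, max_self, ne_eq, Nat.succ_ne_zero, not_false_eq_true, zero_pow, mul_zero,
      sub_zero, smul_zero]
    have h1 : (fun t : ℝ => max 0 t ^ (m + 2)) =O[𝓝 0] fun t : ℝ => t ^ (m + 2) := by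
      refine Asymptotics.IsBigO.of_bound 1 (Eventually.of_forall fun t => ?_)
      rw [norm_pow, norm_pow, one_mul]
      gcongr
      rcases le_total t 0 with h | h <;> simp [h]
    refine h1.trans_isLittleO ?_
    have := Asymptotics.isLittleO_pow_pow (𝕜 := ℝ) (m := 1) (n := m + 2) (by omega)
    simpa using this
  · have : (fun s : ℝ => max 0 s ^ (m + 2)) =ᶠ[𝓝 s] fun s => s ^ (m + 2) := by
      filter_upwards [lt_mem_nhds h] with t ht
      simp [max_eq_right ht.le]
    rw [max_eq_right h.le]
    simpa using (hasDerivAt_pow (m + 2) s).congr_of_eventuallyEq this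

lemma contDiff_max_pow (m : ℕ) : ContDiff ℝ 1 (fun s : ℝ => max 0 s ^ (m + 2)) := by
  rw [contDiff_one_iff_deriv]
  refine ⟨fun s => (hasDerivAt_max_pow m s).differentiableAt, ?_⟩
  have : deriv (fun s : ℝ => max 0 s ^ (m + 2)) = fun s : ℝ => ((m : ℝ) + 2) * max 0 s ^ (m + 1) :=
    funext fun s => (hasDerivAt_max_pow m s).deriv
  rw [this]
  fun_prop

/-- A `C¹` cut-off at scale `√ε` around `x`. -/
def cutoff (ε : ℝ) (x y : ℂ) : ℂ := ((max 0 (1 - normSq (y - x) / ε) ^ 3 : ℝ) : ℂ)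

/-- The nonnegative approximate identity `(6/ε) max(0, 1 - |y-x|²/ε)²` around `x`; it is
`-∂̄ cutoff / (y - x)`. -/
def kap (ε : ℝ) (x y : ℂ) : ℝ := 6 / ε * max 0 (1 - normSq (y - x) / ε) ^ 2

/-- The kernel `-∂̄b / (y - x)`, which depends holomorphically on `x`. -/
def psi (b : ContDiffBump (0 : ℂ)) (x y : ℂ) : ℂ :=
  -dbar (fun y => (b y : ℂ)) y 1 / (y - x)

lemma contDiff_normSq_sub (x : ℂ) : ContDiff ℝ ⊤ fun y : ℂ => normSq (y - x) := by
  simp only [normSq_apply, sub_re, sub_im]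
  have h1 : ContDiff ℝ ⊤ fun y : ℂ => y.re := reCLM.contDiff
  have h2 : ContDiff ℝ ⊤ fun y : ℂ => y.im := imCLM.contDiff
  fun_prop

lemma hasFDerivAt_normSq_sub (x y : ℂ) : HasFDerivAt (fun y : ℂ => normSq (y - x))
    ((2 * (y - x).re) • reCLM + (2 * (y - x).im) • imCLM) y := by
  simp only [normSq_apply]
  have h1 : HasFDerivAt (fun y : ℂ => (y - x).re) reCLM y :=
    (reCLM.hasFDerivAt (x := y)).sub_const x.re
  have h2 : HasFDerivAt (fun y : ℂ => (y - x).im) imCLM y :=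
    (imCLM.hasFDerivAt (x := y)).sub_const x.im
  refine ((h1.mul h1).add (h2.mul h2)).congr_fderiv ?_
  ext v
  simp
  ring

lemma contDiff_cutoff (ε : ℝ) (x : ℂ) : ContDiff ℝ 1 (cutoff ε x) := by
  refine ofRealCLM.contDiff.comp ((contDiff_max_pow 1).comp ?_)
  exact contDiff_const.sub (((contDiff_normSq_sub x).of_le le_top).div_const ε)

lemma dbar_cutoff (ε : ℝ) (x y : ℂ) : dbar (cutoff ε x) y 1 = -(kap ε x y) * (y - x) := by
  have h1 : HasFDerivAt (fun y : ℂ => 1 - normSq (y - x) / ε)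
      (-(ε⁻¹ • ((2 * (y - x).re) • reCLM + (2 * (y - x).im) • imCLM))) y := by
    simp only [div_eq_mul_inv]
    exact ((hasFDerivAt_normSq_sub x y).mul_const ε⁻¹).const_sub 1
  have h2 := (hasDerivAt_max_pow 1 (1 - normSq (y - x) / ε)).comp_hasFDerivAt y h1
  have h3 := (ofRealCLM.hasFDerivAt).comp y h2
  have h4 : fderiv ℝ (cutoff ε x) y = _ := h3.fderiv
  simp only [dbar, h4, kap]
  apply Complex.ext <;> simp <;> ring

lemma kap_nonneg {ε : ℝ} (hε : 0 < ε) (x y : ℂ) : 0 ≤ kap ε x y := by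
  unfold kap; positivity

lemma kap_pos {ε : ℝ} (hε : 0 < ε) (x : ℂ) : 0 < kap ε x x := by
  simp [kap, hε]

lemma contDiff_kap (ε : ℝ) (x : ℂ) : ContDiff ℝ 1 (kap ε x) := by
  refine contDiff_const.mul ((contDiff_max_pow 0).comp ?_)
  exact contDiff_const.sub (((contDiff_normSq_sub x).of_le le_top).div_const ε)

lemma max_eq_zero_of_far {ε : ℝ} (hε : 0 < ε) {x y : ℂ} (h : ε ≤ ‖y - x‖ ^ 2) :
    max 0 (1 - normSq (y - x) / ε) = 0 := by
  rw [normSq_eq_norm_sq]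
  have := (one_le_div hε).2 h
  exact max_eq_left (by linarith)

lemma kap_eq_zero {ε : ℝ} (hε : 0 < ε) {x y : ℂ} (h : ε ≤ ‖y - x‖ ^ 2) : kap ε x y = 0 := by
  simp [kap, max_eq_zero_of_far hε h]

lemma cutoff_eq_zero {ε : ℝ} (hε : 0 < ε) {x y : ℂ} (h : ε ≤ ‖y - x‖ ^ 2) : cutoff ε x y = 0 := by
  simp [cutoff, max_eq_zero_of_far hε h]

lemma far_of_norm {η ρ : ℝ} (hη : 0 < η) {x y : ℂ} (hx : ‖x‖ + η ≤ ρ) (hy : ρ < ‖y‖) :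
    η ^ 2 ≤ ‖y - x‖ ^ 2 := by
  have := norm_sub_norm_le y x
  gcongr
  linarith

lemma isKernel_kap {η ρ : ℝ} (hη : 0 < η) {x : ℂ} (hx : ‖x‖ + η ≤ ρ) :
    IsKernel ρ (fun y => (kap (η ^ 2) x y : ℂ)) :=
  ⟨ofRealCLM.contDiff.comp (contDiff_kap _ x), fun y hy => by
    simp [kap_eq_zero (pow_pos hη 2) (far_of_norm hη hx hy)]⟩

section bump
variable (b : ContDiffBump (0 : ℂ))

lemma contDiff_bump : ContDiff ℝ 2 (fun y => (b y : ℂ)) := ofRealCLM.contDiff.comp b.contDiff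

lemma contDiff_dbar_bump : ContDiff ℝ 1 (fun y => dbar (fun y => (b y : ℂ)) y 1) := by
  have h : ContDiff ℝ 1 (fderiv ℝ (fun y => (b y : ℂ))) :=
    (contDiff_bump b).fderiv_right (by norm_num)
  exact (h.clm_apply contDiff_const).add (contDiff_const.mul (h.clm_apply contDiff_const))

lemma bump_eventually_one {x : ℂ} (hx : ‖x‖ < b.rIn) : (fun y => (b y : ℂ)) =ᶠ[𝓝 x] fun _ => 1 := by
  filter_upwards [isOpen_ball.mem_nhds (mem_ball_zero_iff.2 hx)] with y hy
  rw [b.one_of_mem_closedBall (ball_subset_closedBall hy)]; simp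

lemma dbar_bump_of_lt {x : ℂ} (hx : ‖x‖ < b.rIn) : dbar (fun y => (b y : ℂ)) x 1 = 0 := by
  simp [dbar, (bump_eventually_one b hx).fderiv_eq]

lemma bump_eq_zero {y : ℂ} (hy : b.rOut ≤ ‖y‖) : b y = 0 :=
  b.zero_of_le_dist (by simpa using hy)

lemma dbar_bump_of_gt {y : ℂ} (hy : b.rOut < ‖y‖) : dbar (fun y => (b y : ℂ)) y 1 = 0 := by
  have : (fun y => (b y : ℂ)) =ᶠ[𝓝 y] fun _ => 0 := by
    filter_upwards [continuous_norm.continuousAt.eventually (lt_mem_nhds hy)] with u hu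
    simp [bump_eq_zero b hu.le]
  simp [dbar, this.fderiv_eq]

lemma isKernel_psi {x : ℂ} (hx : ‖x‖ < b.rIn) : IsKernel b.rOut (psi b x) := by
  constructor
  · rw [contDiff_iff_contDiffAt]
    intro y
    by_cases h : y = x
    · subst h
      have : psi b y =ᶠ[𝓝 y] fun _ => 0 := by
        filter_upwards [isOpen_ball.mem_nhds (mem_ball_zero_iff.2 hx)] with u hu
        simp [psi, dbar_bump_of_lt b (mem_ball_zero_iff.1 hu)]
      exact contDiffAt_const.congr_of_eventuallyEq this
    · have h1 : ContDiffAt ℝ 1 (fun y : ℂ => (y - x)⁻¹) y :=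
        (contDiffAt_id.sub contDiffAt_const).inv (sub_ne_zero.2 h)
      have h2 := (contDiff_dbar_bump b).contDiffAt (x := y)
      exact h2.neg.mul h1
  · intro y hy
    simp [psi, dbar_bump_of_gt b hy]

/-- The difference of the two kernels at `x` is `∂̄`-exact with compactly supported primitive. -/
lemma exists_primitive {η : ℝ} (hη : 0 < η) {x : ℂ} (hx : ‖x‖ < b.rIn) (hx' : ‖x‖ + η ≤ b.rOut) :
    ∃ θ, IsKernel b.rOut θ ∧ ∀ y, (kap (η ^ 2) x y : ℂ) - psi b x y = dbar θ y 1 := by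
  have hε : 0 < η ^ 2 := pow_pos hη 2
  set ε := η ^ 2 with hεd
  let θ : ℂ → ℂ := fun y => (b y - cutoff ε x y) * (y - x)⁻¹
  have hK : IsKernel b.rOut θ := by
    constructor
    · rw [contDiff_iff_contDiffAt]
      intro y
      by_cases h : y = x
      · subst h
        have hev : θ =ᶠ[𝓝 y] fun u => conj (u - y) / ε *
            (3 - 3 * (normSq (u - y) / ε : ℝ) + ((normSq (u - y) / ε) ^ 2 : ℝ)) := by
          have h1 : ∀ᶠ u in 𝓝 y, normSq (u - y) < ε := by
            have : ContinuousAt (fun u => normSq (u - y)) y :=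
              ((contDiff_normSq_sub y).continuous).continuousAt
            exact this.eventually_lt continuousAt_const (by simpa using hε)
          filter_upwards [h1, bump_eventually_one b hx] with u hu hu1
          have h2 : 0 ≤ 1 - normSq (u - y) / ε := by
            have := (div_lt_one hε).2 hu; linarith
          simp only [θ, cutoff, hu1, max_eq_right h2]
          by_cases h3 : u = y
          · simp [h3]
          · have h4 := sub_ne_zero.2 h3
            have h5 : (ε : ℂ) ≠ 0 := by exact_mod_cast hε.ne'
            push_cast
            rw [← Complex.mul_conj]
            field_simp
            ring
        refine ContDiffAt.congr_of_eventuallyEq ?_ hev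
        have h1 : ContDiff ℝ 1 fun u : ℂ => (conj (u - y) : ℂ) :=
          conjCLE.contDiff.comp (contDiff_id.sub contDiff_const)
        have h2 : ContDiff ℝ 1 fun u : ℂ => normSq (u - y) / ε :=
          ((contDiff_normSq_sub y).of_le le_top).div_const ε
        have h3 : ContDiff ℝ 1 fun u : ℂ => ((normSq (u - y) / ε : ℝ) : ℂ) :=
          ofRealCLM.contDiff.comp h2
        have h4 : ContDiff ℝ 1 fun u : ℂ => (((normSq (u - y) / ε) ^ 2 : ℝ) : ℂ) :=
          ofRealCLM.contDiff.comp (h2.pow 2)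
        exact ((h1.div_const _).mul
          ((contDiff_const.sub (contDiff_const.mul h3)).add h4)).contDiffAt
      · have h1 : ContDiffAt ℝ 1 (fun y : ℂ => (y - x)⁻¹) y :=
          (contDiffAt_id.sub contDiffAt_const).inv (sub_ne_zero.2 h)
        exact ((((contDiff_bump b).of_le (by norm_num)).sub
          (contDiff_cutoff ε x)).contDiffAt).mul h1
    · intro y hy
      simp [θ, bump_eq_zero b hy.le, cutoff_eq_zero hε (far_of_norm hη hx' hy)]
  refine ⟨θ, hK, ?_⟩
  have hc1 : Continuous fun y => (kap ε x y : ℂ) - psi b x y :=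
    (continuous_ofReal.comp (contDiff_kap ε x).continuous).sub (isKernel_psi b hx).1.continuous
  have hc2 : Continuous fun y => dbar θ y 1 := by
    have h := hK.1.continuous_fderiv one_ne_zero
    exact (h.clm_apply continuous_const).add (continuous_const.mul (h.clm_apply continuous_const))
  refine congrFun (hc1.ext_on (dense_compl_singleton x) hc2 fun y hy => ?_)
  have hyx : y - x ≠ 0 := sub_ne_zero.2 hy
  have hd1 : DifferentiableAt ℂ (fun y : ℂ => (y - x)⁻¹) y :=
    (differentiableAt_id.sub_const x).inv hyx
  have hdb : DifferentiableAt ℝ (fun y => (b y : ℂ)) y :=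
    (contDiff_bump b).differentiable (by norm_num) y
  have hdc : DifferentiableAt ℝ (cutoff ε x) y :=
    (contDiff_cutoff ε x).differentiable one_ne_zero y
  have hsub : dbar (fun y => (b y : ℂ) - cutoff ε x y) y 1 =
      dbar (fun y => (b y : ℂ)) y 1 - dbar (cutoff ε x) y 1 := by
    simp only [dbar]
    rw [fderiv_fun_sub hdb hdc]
    simp
    ring
  simp only [θ]
  rw [dbar_mul _ (hdb.fun_sub hdc) (hd1.restrictScalars ℝ), dbar_holo _ hd1, hsub, dbar_cutoff]
  simp only [psi]
  field_simp
  ring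

end bump

/-! ### The residue pairing -/

/-- The residue pairing `∫ (∏ⱼ φⱼ(Fⱼ)) H J̄` over the ball of radius `r`, where `J` is the
Jacobian determinant of `F`. -/
def pairing {n : ℕ} (F : (Fin n → ℂ) → Fin n → ℂ) (r : ℝ) (φ : Fin n → ℂ → ℂ)
    (H : (Fin n → ℂ) → ℂ) : ℂ :=
  ∫ z in ball 0 r, (∏ j, φ j (F z j)) * H z * conj (jac F z).det

/-- `F` is holomorphic near the closed ball of radius `r`, and `‖F‖ ≥ δ` on its sphere. -/
structure IsAdmissible {n : ℕ} (F : (Fin n → ℂ) → Fin n → ℂ) (r δ : ℝ) : Prop where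
  pos : 0 < r
  an : ∀ z ∈ closedBall 0 r, AnalyticAt ℂ F z
  bound : ∀ z ∈ sphere 0 r, δ ≤ ‖F z‖

section pairing
variable {n : ℕ} {F : (Fin n → ℂ) → Fin n → ℂ} {r δ : ℝ}

lemma continuousOn_component (hA : IsAdmissible F r δ) (j : Fin n) :
    ContinuousOn (fun z => F z j) (closedBall 0 r) := fun z hz =>
  ((continuous_apply j).continuousAt.comp (hA.an z hz).continuousAt).continuousWithinAt

lemma continuousOn_det (hA : IsAdmissible F r δ) :
    ContinuousOn (fun z => (jac F z).det) (closedBall 0 r) := fun z hz =>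
  (analyticAt_det_jac (hA.an z hz)).continuousAt.continuousWithinAt

lemma continuousOn_integrand (hA : IsAdmissible F r δ) {φ : Fin n → ℂ → ℂ}
    {H : (Fin n → ℂ) → ℂ} (hφ : ∀ j, Continuous (φ j)) (hH : ContinuousOn H (closedBall 0 r)) :
    ContinuousOn (fun z => (∏ j, φ j (F z j)) * H z * conj (jac F z).det) (closedBall 0 r) := by
  refine ((continuousOn_finsetProd _ fun j _ => ?_).mul hH).mul
    (continuous_conj.comp_continuousOn (continuousOn_det hA))
  exact (hφ j).comp_continuousOn (continuousOn_component hA j)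

lemma integrableOn_ball {E : Type*} [NormedAddCommGroup E] {u : (Fin n → ℂ) → E}
    (hc : ContinuousOn u (closedBall 0 r)) : IntegrableOn u (ball 0 r) :=
  (hc.integrableOn_compact (isCompact_closedBall _ _)).mono_set ball_subset_closedBall

lemma exists_lt_norm_apply {ρ : ℝ} (hρ : 0 ≤ ρ) {y : Fin n → ℂ} (hy : ρ < ‖y‖) :
    ∃ j, ρ < ‖y j‖ := by
  by_contra! h
  exact absurd ((pi_norm_le_iff_of_nonneg hρ).2 h) (not_le.2 hy)

/-- The product `∏ⱼ φⱼ(yⱼ)` with the `j`-th factor replaced: its `∂̄_j` derivative. -/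
lemma dbar_prod {φ : Fin n → ℂ → ℂ} (hφ : ∀ j, ContDiff ℝ 1 (φ j)) (j : Fin n)
    (y : Fin n → ℂ) :
    dbar (fun y : Fin n → ℂ => ∏ i, φ i (y i)) y (Pi.single j 1) =
      dbar (φ j) (y j) 1 * ∏ i ∈ Finset.univ.erase j, φ i (y i) := by
  have hu : HasFDerivAt (𝕜 := ℂ) (Function.update y j)
      (.pi (Pi.single j (.id ℂ ℂ))) (y j) := hasFDerivAt_update y (y j)
  have hP : ContDiff ℝ 1 (fun y : Fin n → ℂ => ∏ i, φ i (y i)) :=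
    contDiff_prod fun i _ => (hφ i).comp (contDiff_apply ℝ ℂ i)
  have h1 := dbar_comp (φ := fun y : Fin n → ℂ => ∏ i, φ i (y i)) (F := Function.update y j)
    (z := y j) 1 (hP.differentiable one_ne_zero _) hu.differentiableAt
  have h2 : fderiv ℂ (Function.update y j) (y j) 1 = Pi.single j 1 := by
    rw [hu.fderiv]
    ext i
    by_cases h : i = j
    · subst h; simp
    · simp [h]
  rw [h2, Function.update_eq_self] at h1
  rw [← h1]
  have h3 : (fun c => ∏ i, φ i (Function.update y j c i)) =
      fun c => φ j c * ∏ i ∈ Finset.univ.erase j, φ i (y i) := by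
    funext c
    rw [← Finset.mul_prod_erase _ _ (Finset.mem_univ j), Function.update_self]
    congr 1
    refine Finset.prod_congr rfl fun i hi => ?_
    rw [Function.update_of_ne (Finset.ne_of_mem_erase hi)]
  rw [h3, dbar_mul _ ((hφ j).differentiable one_ne_zero _) (differentiableAt_const _),
    dbar_holo _ (differentiableAt_const _)]
  ring

lemma pairing_swap_one (hA : IsAdmissible F r δ) {ρ : ℝ} (hρ : 0 ≤ ρ) (hρδ : ρ < δ)
    {H : (Fin n → ℂ) → ℂ} (hH : ∀ z ∈ closedBall 0 r, AnalyticAt ℂ H z)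
    {φ φ' : Fin n → ℂ → ℂ} (hφ : ∀ j, IsKernel ρ (φ j)) (hφ' : ∀ j, IsKernel ρ (φ' j))
    (j : Fin n) (heq : ∀ i, i ≠ j → φ i = φ' i)
    (hθ : ∃ θ, IsKernel ρ θ ∧ ∀ y, φ j y - φ' j y = dbar θ y 1) :
    pairing F r φ H = pairing F r φ' H := by
  obtain ⟨θ, hθk, hθd⟩ := hθ
  have hHc : ContinuousOn H (closedBall 0 r) := fun z hz =>
    (hH z hz).continuousAt.continuousWithinAt
  have hker : ∀ i, IsKernel ρ (Function.update φ j θ i) := by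
    intro i
    by_cases h : i = j
    · subst h; simpa using hθk
    · simpa [h] using hφ i
  rw [← sub_eq_zero, pairing, pairing, ← integral_sub
    (integrableOn_ball (continuousOn_integrand hA (fun j => (hφ j).1.continuous) hHc))
    (integrableOn_ball (continuousOn_integrand hA (fun j => (hφ' j).1.continuous) hHc))]
  have hsupp : tsupport (fun y : Fin n → ℂ => ∏ i, Function.update φ j θ i (y i)) ⊆
      closedBall 0 ρ := by
    refine closure_minimal (fun y hy => ?_) isClosed_closedBall
    rw [mem_closedBall_zero_iff]
    by_contra! h
    obtain ⟨i, hi⟩ := exists_lt_norm_apply hρ h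
    exact hy (Finset.prod_eq_zero (Finset.mem_univ i) ((hker i).2 _ hi))
  rw [← integral_exact_eq_zero (Θ := fun y => ∏ i, Function.update φ j θ i (y i)) hA.an hH
    (contDiff_prod fun i _ => (hker i).1.comp (contDiff_apply ℝ ℂ i))
    (fun z hz hmem => by
      have h1 := mem_closedBall_zero_iff.1 (hsupp hmem)
      have h2 := hA.bound z hz
      linarith) j]
  refine setIntegral_congr_fun measurableSet_ball fun z _ => ?_
  rw [dbar_prod (fun i => (hker i).1), Function.update_self, ← hθd,
    ← Finset.mul_prod_erase _ _ (Finset.mem_univ j),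
    ← Finset.mul_prod_erase _ (fun i => φ' i (F z i)) (Finset.mem_univ j)]
  have e1 : ∏ i ∈ Finset.univ.erase j, Function.update φ j θ i (F z i) =
      ∏ i ∈ Finset.univ.erase j, φ i (F z i) :=
    Finset.prod_congr rfl fun i hi => by
      rw [Function.update_of_ne (Finset.ne_of_mem_erase hi)]
  have e2 : ∏ i ∈ Finset.univ.erase j, φ' i (F z i) =
      ∏ i ∈ Finset.univ.erase j, φ i (F z i) :=
    Finset.prod_congr rfl fun i hi => by rw [heq i (Finset.ne_of_mem_erase hi)]
  rw [e1, e2]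
  ring

/-- The residue pairing does not change when kernels are replaced by `∂̄`-cohomologous ones. -/
lemma pairing_swap (hA : IsAdmissible F r δ) {ρ : ℝ} (hρ : 0 ≤ ρ) (hρδ : ρ < δ)
    {H : (Fin n → ℂ) → ℂ} (hH : ∀ z ∈ closedBall 0 r, AnalyticAt ℂ H z)
    {φ φ' : Fin n → ℂ → ℂ} (hφ : ∀ j, IsKernel ρ (φ j)) (hφ' : ∀ j, IsKernel ρ (φ' j))
    (hθ : ∀ j, ∃ θ, IsKernel ρ θ ∧ ∀ y, φ j y - φ' j y = dbar θ y 1) :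
    pairing F r φ H = pairing F r φ' H := by
  have key : ∀ s : Finset (Fin n), pairing F r φ H = pairing F r (s.piecewise φ' φ) H := by
    intro s
    induction s using Finset.induction_on with
    | empty => simp
    | insert j s hj ih =>
      rw [ih]
      have hk : ∀ s : Finset (Fin n), ∀ i, IsKernel ρ (s.piecewise φ' φ i) := by
        intro s i
        by_cases h : i ∈ s
        · simpa [h] using hφ' i
        · simpa [h] using hφ i
      refine pairing_swap_one hA hρ hρδ hH (hk _) (hk _) j (fun i hi => ?_) ?_
      · simp [Finset.piecewise, hi]
      · simpa [hj] using hθ j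
  simpa using key Finset.univ

lemma pairing_psi_eq_kap (hA : IsAdmissible F r δ) {b : ContDiffBump (0 : ℂ)} (hb : b.rOut < δ)
    {H : (Fin n → ℂ) → ℂ} (hH : ∀ z ∈ closedBall 0 r, AnalyticAt ℂ H z) {x : Fin n → ℂ}
    (hx : ‖x‖ < b.rIn) {η : ℝ} (hη : 0 < η) (hxη : ‖x‖ + η ≤ b.rOut) :
    pairing F r (fun j => psi b (x j)) H =
      pairing F r (fun j y => (kap (η ^ 2) (x j) y : ℂ)) H := by
  have hj : ∀ j, ‖x j‖ ≤ ‖x‖ := norm_le_pi_norm x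
  refine (pairing_swap hA b.rOut_pos.le hb hH
    (fun j => isKernel_kap hη (by linarith [hj j]))
    (fun j => isKernel_psi b (by linarith [hj j])) fun j => ?_).symm
  exact exists_primitive b hη (by linarith [hj j]) (by linarith [hj j])

/-- The mass `∫ ∏ κ(Fⱼ - xⱼ) |J|²`. -/
lemma pairing_kap_det (ε : ℝ) (x : Fin n → ℂ) :
    pairing F r (fun j y => (kap ε (x j) y : ℂ)) (fun z => (jac F z).det) =
      ((∫ z in ball 0 r, (∏ j, kap ε (x j) (F z j)) * ‖(jac F z).det‖ ^ 2 : ℝ) : ℂ) := by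
  rw [pairing, ← integral_complex_ofReal]
  refine setIntegral_congr_fun measurableSet_ball fun z _ => ?_
  rw [mul_assoc, Complex.mul_conj']
  push_cast
  rfl

lemma continuousOn_mass (hA : IsAdmissible F r δ) (ε : ℝ) (x : Fin n → ℂ) :
    ContinuousOn (fun z => (∏ j, kap ε (x j) (F z j)) * ‖(jac F z).det‖ ^ 2)
      (closedBall 0 r) := by
  refine (continuousOn_finsetProd _ fun j _ => ?_).mul ((continuousOn_det hA).norm.pow 2)
  exact (contDiff_kap ε (x j)).continuous.comp_continuousOn (continuousOn_component hA j)

/-- The pairing at `x` with `H · J` vanishes as soon as `H` vanishes on the fibre over `x`. -/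
theorem pairing_eq_zero (hA : IsAdmissible F r δ) {b : ContDiffBump (0 : ℂ)} (hb : b.rOut < δ)
    {H : (Fin n → ℂ) → ℂ} (hH : ∀ z ∈ closedBall 0 r, AnalyticAt ℂ H z) {x : Fin n → ℂ}
    (hx : ‖x‖ < b.rIn) (h0 : ∀ z ∈ closedBall 0 r, F z = x → H z = 0) :
    pairing F r (fun j => psi b (x j)) (fun z => H z * (jac F z).det) = 0 := by
  have hHc : ContinuousOn H (closedBall 0 r) := fun z hz =>
    (hH z hz).continuousAt.continuousWithinAt
  have hHJ : ∀ z ∈ closedBall 0 r, AnalyticAt ℂ (fun z => H z * (jac F z).det) z :=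
    fun z hz => (hH z hz).mul (analyticAt_det_jac (hA.an z hz))
  set P := pairing F r (fun j => psi b (x j)) (fun z => H z * (jac F z).det) with hP
  set τ := (pairing F r (fun j => psi b (x j)) (fun z => (jac F z).det)).re with hτ
  have main : ∀ c > 0, ‖P‖ ≤ c * τ ∧ 0 ≤ τ := by
    intro c hc
    obtain ⟨η₁, hη₁, hsm⟩ : ∃ η₁ > 0, ∀ z ∈ closedBall 0 r, ‖F z - x‖ < η₁ → ‖H z‖ ≤ c := by
      have hK : IsCompact (closedBall 0 r ∩ (fun z => ‖H z‖) ⁻¹' Set.Ici c) :=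
        (isCompact_closedBall (0 : Fin n → ℂ) r).of_isClosed_subset
          (hHc.norm.preimage_isClosed_of_isClosed isClosed_closedBall isClosed_Ici)
          Set.inter_subset_left
      rcases (closedBall (0 : Fin n → ℂ) r ∩ (fun z => ‖H z‖) ⁻¹' Set.Ici c).eq_empty_or_nonempty
        with he | hne
      · refine ⟨1, one_pos, fun z hz _ => ?_⟩
        by_contra! h
        have : z ∈ (∅ : Set (Fin n → ℂ)) := he ▸ ⟨hz, h.le⟩
        exact this
      · obtain ⟨z₀, hz₀, hmin⟩ := hK.exists_isMinOn hne (f := fun z => ‖F z - x‖)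
          (fun z hz => ((hA.an z hz.1).continuousAt.sub
            continuousAt_const).norm.continuousWithinAt)
        refine ⟨‖F z₀ - x‖, norm_pos_iff.2 (sub_ne_zero.2 fun h => ?_), fun z hz hlt => ?_⟩
        · have h1 := h0 z₀ hz₀.1 h
          have h2 : c ≤ ‖H z₀‖ := hz₀.2
          rw [h1, norm_zero] at h2
          linarith
        · by_contra! h
          exact absurd (hmin ⟨hz, h.le⟩ : ‖F z₀ - x‖ ≤ ‖F z - x‖) (not_le.2 hlt)
    obtain ⟨η, hη, hηb, hη1⟩ : ∃ η > 0, ‖x‖ + η ≤ b.rOut ∧ η ≤ η₁ := by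
      have h1 := b.rIn_lt_rOut
      exact ⟨min (b.rOut - ‖x‖) η₁, lt_min (by linarith) hη₁,
        by linarith [min_le_left (b.rOut - ‖x‖) η₁], min_le_right _ _⟩
    have hτ' : τ = ∫ z in ball 0 r, (∏ j, kap (η ^ 2) (x j) (F z j)) * ‖(jac F z).det‖ ^ 2 := by
      rw [hτ, pairing_psi_eq_kap hA hb (fun z hz => analyticAt_det_jac (hA.an z hz)) hx hη hηb,
        pairing_kap_det, ofReal_re]
    have hnn : ∀ z, 0 ≤ ∏ j, kap (η ^ 2) (x j) (F z j) := fun z =>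
      Finset.prod_nonneg fun j _ => kap_nonneg (pow_pos hη 2) _ _
    refine ⟨?_, ?_⟩
    · rw [hP, pairing_psi_eq_kap hA hb hHJ hx hη hηb, hτ', ← integral_const_mul, pairing]
      refine norm_integral_le_of_norm_le
        ((integrableOn_ball (continuousOn_mass hA _ _)).integrable.const_mul _) ?_
      refine (ae_restrict_iff' measurableSet_ball).2 (Eventually.of_forall fun z hz => ?_)
      have hz' := ball_subset_closedBall hz
      have e1 : ‖∏ j, (kap (η ^ 2) (x j) (F z j) : ℂ)‖ = ∏ j, kap (η ^ 2) (x j) (F z j) := by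
        rw [← ofReal_prod, Complex.norm_real, Real.norm_of_nonneg (hnn z)]
      rw [norm_mul, norm_mul, norm_mul, e1, RCLike.norm_conj]
      by_cases hfar : ∃ j, η ^ 2 ≤ ‖F z j - x j‖ ^ 2
      · obtain ⟨j, hj⟩ := hfar
        have : ∏ j, kap (η ^ 2) (x j) (F z j) = 0 :=
          Finset.prod_eq_zero (Finset.mem_univ j) (kap_eq_zero (pow_pos hη 2) hj)
        simp [this]
      · push Not at hfar
        have hlt : ‖F z - x‖ < η := (pi_norm_lt_iff hη).2 fun j =>
          lt_of_pow_lt_pow_left₀ 2 hη.le (hfar j)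
        have hc' := hsm z hz' (hlt.trans_le hη1)
        have := mul_le_mul_of_nonneg_right hc'
          (mul_nonneg (hnn z) (sq_nonneg ‖(jac F z).det‖))
        calc _ = ‖H z‖ * ((∏ j, kap (η ^ 2) (x j) (F z j)) * ‖(jac F z).det‖ ^ 2) := by ring
          _ ≤ _ := this
    · rw [hτ']
      exact integral_nonneg fun z => mul_nonneg (hnn z) (sq_nonneg _)
  by_contra hne
  have hPpos : 0 < ‖P‖ := norm_pos_iff.2 hne
  have hτ0 := (main 1 one_pos).2
  have h1 := (main (‖P‖ / (2 * (τ + 1))) (by positivity)).1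
  rw [div_mul_eq_mul_div, le_div_iff₀ (by positivity)] at h1
  nlinarith

/-- The pairing of `J` at the origin is the mass of a nonzero nonnegative function. -/
theorem pairing_det_ne_zero (hF : IsFiniteMapGerm n F) (hA : IsAdmissible F r δ)
    {b : ContDiffBump (0 : ℂ)} (hb : b.rOut < δ) :
    pairing F r (fun j => psi b ((0 : Fin n → ℂ) j)) (fun z => (jac F z).det) ≠ 0 := by
  have hO := b.rOut_pos
  rw [pairing_psi_eq_kap hA hb (fun z hz => analyticAt_det_jac (hA.an z hz))
    (by simpa using b.rIn_pos) hO (by simp), pairing_kap_det]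
  intro h
  have hε : 0 < b.rOut ^ 2 := pow_pos hO 2
  have h1 := eq_zero_of_setIntegral_ball (continuousOn_mass hA _ _)
    (fun z _ => mul_nonneg (Finset.prod_nonneg fun j _ => kap_nonneg hε _ _) (sq_nonneg _))
    (ofReal_eq_zero.1 h)
  refine det_jac_not_eventually_zero hF ?_
  have hev : ∀ j : Fin n, ∀ᶠ z in 𝓝 0, 0 < kap (b.rOut ^ 2) ((0 : Fin n → ℂ) j) (F z j) := by
    intro j
    have hc : ContinuousAt (fun z => kap (b.rOut ^ 2) ((0 : Fin n → ℂ) j) (F z j)) 0 :=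
      ((contDiff_kap _ _).continuous.continuousAt).comp
        ((continuous_apply j).continuousAt.comp hF.1.continuousAt)
    refine hc.eventually (lt_mem_nhds ?_)
    change 0 < kap (b.rOut ^ 2) ((0 : Fin n → ℂ) j) (F 0 j)
    rw [hF.2.1]
    exact kap_pos hε _
  filter_upwards [eventually_all.2 hev, ball_mem_nhds _ hA.pos] with z hz hzr
  have h2 := h1 z hzr
  have h3 : 0 < ∏ j, kap (b.rOut ^ 2) ((0 : Fin n → ℂ) j) (F z j) :=
    Finset.prod_pos fun j _ => hz j
  exact pow_eq_zero_iff two_ne_zero |>.1 ((mul_eq_zero.1 h2).resolve_left h3.ne') |> norm_eq_zero.1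

/-- The pairing depends holomorphically on the base point. -/
theorem analyticAt_pairing (hA : IsAdmissible F r δ) {b : ContDiffBump (0 : ℂ)}
    (hb : b.rOut < δ) {H : (Fin n → ℂ) → ℂ} (hH : ContinuousOn H (closedBall 0 r)) :
    AnalyticAt ℂ (fun x : Fin n → ℂ => pairing F r (fun j => psi b (x j)) H) 0 := by
  set K : Set (Fin n → ℂ) := closedBall 0 r ∩
    F ⁻¹' {y | ∀ j, y j ∈ closedBall (0 : ℂ) b.rOut \ ball 0 b.rIn} with hKdef
  have hFc : ContinuousOn F (closedBall 0 r) := fun z hz =>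
    (hA.an z hz).continuousAt.continuousWithinAt
  have hKc : IsCompact K := by
    refine (isCompact_closedBall (0 : Fin n → ℂ) r).of_isClosed_subset
      (hFc.preimage_isClosed_of_isClosed isClosed_closedBall ?_) Set.inter_subset_left
    rw [Set.ofPred_forall]
    exact isClosed_iInter fun j =>
      (isClosed_closedBall.sdiff isOpen_ball).preimage (continuous_apply j)
  have hKb : K ⊆ ball 0 r := by
    rintro z ⟨hz, hz'⟩
    rcases (mem_closedBall.1 hz).lt_or_eq with h | h
    · exact h
    · have h1 := hA.bound z h
      have h2 : ‖F z‖ ≤ b.rOut := (pi_norm_le_iff_of_nonneg b.rOut_pos.le).2 fun j =>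
        mem_closedBall_zero_iff.1 (hz' j).1
      linarith
  have : CompactSpace K := isCompact_iff_compactSpace.1 hKc
  let D : ℂ → ℂ := fun y => dbar (fun y => (b y : ℂ)) y 1
  have hDc : Continuous D := (contDiff_dbar_bump b).continuous
  let W : (Fin n → ℂ) → ℂ := fun z => (∏ j, -D (F z j)) * H z * conj (jac F z).det
  have hWc : ContinuousOn W (closedBall 0 r) :=
    continuousOn_integrand (φ := fun _ y => -D y) hA (fun _ => hDc.neg) hH
  have hW0 : ∀ z ∈ ball 0 r, z ∉ K → W z = 0 := by
    intro z hz hzK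
    have : ∃ j, F z j ∉ closedBall (0 : ℂ) b.rOut \ ball 0 b.rIn := by
      by_contra! h
      exact hzK ⟨ball_subset_closedBall hz, h⟩
    obtain ⟨j, hj⟩ := this
    have hD0 : D (F z j) = 0 := by
      by_cases h : F z j ∈ ball (0 : ℂ) b.rIn
      · exact dbar_bump_of_lt b (mem_ball_zero_iff.1 h)
      · refine dbar_bump_of_gt b ?_
        by_contra! h'
        exact hj ⟨mem_closedBall_zero_iff.2 h', h⟩
    have : ∏ j, -D (F z j) = 0 := Finset.prod_eq_zero (Finset.mem_univ j) (by simp [hD0])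
    simp [W, this]
  let μ : Measure K := volume.comap Subtype.val
  have : IsFiniteMeasure μ := ⟨by
    rw [Measure.comap_apply₀ _ _ Subtype.val_injective (fun s hs =>
      (MeasurableEmbedding.subtype_coe hKc.measurableSet).measurableSet_image.2 hs
        |>.nullMeasurableSet) MeasurableSet.univ.nullMeasurableSet]
    simpa using hKc.measure_lt_top⟩
  have hWK : Continuous (fun k : K => W k) :=
    (hWc.mono (hKb.trans ball_subset_closedBall)).domRestrict
  have hintegr : ∀ f : C(K, ℂ), Integrable (fun k : K => W k * f k) μ := fun f =>
    (hWK.mul f.continuous).integrable_of_hasCompactSupport (HasCompactSupport.of_compactSpace _)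
  let Λ₀ : C(K, ℂ) →ₗ[ℂ] ℂ :=
    { toFun := fun f => ∫ k : K, W k * f k ∂μ
      map_add' := fun f g => by
        rw [← integral_add (hintegr f) (hintegr g)]
        simp [mul_add]
      map_smul' := fun c f => by
        rw [RingHom.id_apply, smul_eq_mul, ← integral_const_mul]
        refine integral_congr_ae (Eventually.of_forall fun k => ?_)
        simp
        ring }
  let Λ : C(K, ℂ) →L[ℂ] ℂ := Λ₀.mkContinuous (∫ k : K, ‖W k‖ ∂μ) (by
    intro f
    rw [← integral_mul_const]
    refine norm_integral_le_of_norm_le ?_ (Eventually.of_forall fun k => ?_)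
    · exact ((hWK.norm).mul continuous_const).integrable_of_hasCompactSupport
        (HasCompactSupport.of_compactSpace _)
    · rw [norm_mul]
      exact mul_le_mul_of_nonneg_left (f.norm_coe_le_norm k) (norm_nonneg _))
  let G : Fin n → C(K, ℂ) := fun j => ⟨fun k => F k j,
    ((continuousOn_component hA j).mono (hKb.trans ball_subset_closedBall)).domRestrict⟩
  have hval : ∀ᶠ x : Fin n → ℂ in 𝓝 0, pairing F r (fun j => psi b (x j)) H =
      Λ (∏ j, Ring.inverse (G j - x j • (1 : C(K, ℂ)))) := by
    filter_upwards [ball_mem_nhds (0 : Fin n → ℂ) b.rIn_pos] with x hx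
    have hxj : ∀ j, ‖x j‖ < b.rIn := fun j =>
      (norm_le_pi_norm x j).trans_lt (mem_ball_zero_iff.1 hx)
    have hne : ∀ (k : K) j, F k j - x j ≠ 0 := by
      intro k j h
      have h1 := (k.2.2 j).2
      rw [sub_eq_zero.1 h] at h1
      exact h1 (mem_ball_zero_iff.2 (hxj j))
    have hinv : ∀ (k : K) j, Ring.inverse (G j - x j • (1 : C(K, ℂ))) k = (F k j - x j)⁻¹ := by
      intro k j
      have hu : IsUnit (G j - x j • (1 : C(K, ℂ))) := by
        rw [ContinuousMap.isUnit_iff_forall_ne_zero]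
        intro k
        rw [ContinuousMap.sub_apply, ContinuousMap.smul_apply, ContinuousMap.one_apply,
          smul_eq_mul, mul_one]
        exact hne k j
      have h1 := congrArg (fun f : C(K, ℂ) => f k) (Ring.mul_inverse_cancel _ hu)
      refine eq_inv_of_mul_eq_one_right ?_
      have h2 : (G j - x j • (1 : C(K, ℂ))) k = F k j - x j := by
        rw [ContinuousMap.sub_apply, ContinuousMap.smul_apply, ContinuousMap.one_apply,
          smul_eq_mul, mul_one]
        rfl
      rw [← h2]
      exact h1
    have h1 : Λ (∏ j, Ring.inverse (G j - x j • (1 : C(K, ℂ)))) =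
        ∫ k : K, (fun z => W z * ∏ j, (F z j - x j)⁻¹) k ∂μ := by
      refine integral_congr_ae (Eventually.of_forall fun k => ?_)
      simp only [ContinuousMap.prod_apply, hinv]
    have h2 := integral_subtype_comap (μ := volume) hKc.measurableSet
      (fun z => W z * ∏ j, (F z j - x j)⁻¹)
    rw [h1, h2, pairing,
      ← setIntegral_eq_of_subset_of_forall_sdiff_eq_zero measurableSet_ball hKb]
    · refine setIntegral_congr_fun measurableSet_ball fun z _ => ?_
      simp only [psi, W, D, div_eq_mul_inv, Finset.prod_mul_distrib]
      ring
    · rintro z ⟨hz, hz'⟩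
      simp [hW0 z hz hz']
  refine AnalyticAt.congr ?_ (hval.mono fun x hx => hx.symm)
  refine (Λ.analyticAt _).comp (Finset.analyticAt_fun_prod _ fun j _ => ?_)
  have hu : IsUnit (G j) := by
    rw [ContinuousMap.isUnit_iff_forall_ne_zero]
    intro k h
    have h1 := (k.2.2 j).2
    have h2 : F k j = 0 := h
    rw [h2] at h1
    exact h1 (mem_ball_self b.rIn_pos)
  obtain ⟨u, hu⟩ := hu
  have h1 : AnalyticAt ℂ (fun x : Fin n → ℂ => G j - x j • (1 : C(K, ℂ))) 0 := by
    refine analyticAt_const.sub (AnalyticAt.fun_smul (f := fun x : Fin n → ℂ => x j) ?_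
      analyticAt_const)
    exact (ContinuousLinearMap.proj (R := ℂ) (φ := fun _ : Fin n => ℂ) j).analyticAt _
  refine AnalyticAt.comp (g := Ring.inverse) ?_ h1
  simpa [← hu] using analyticAt_inverse (𝕜 := ℂ) u

end pairing

/-! ### Zero sets near a smooth hypersurface -/

/-- If `q` is a submersion at `0` and `{φ = 0} ⊆ {q = 0}` near `0`, then equality holds: a point
of `{q = 0}` near which `φ` has no zero would give, on a small disc transverse to `{q = 0}`,
a nowhere zero function violating the minimum principle. -/
lemma zero_of_zero_of_submersion {n : ℕ} {φ q : (Fin n → ℂ) → ℂ} (hφ : AnalyticAt ℂ φ 0)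
    (hq : AnalyticAt ℂ q 0) (hφ0 : φ 0 = 0) (hsub : ∀ᶠ z in 𝓝 0, φ z = 0 → q z = 0)
    (hdq : fderiv ℂ q 0 ≠ 0) : ∀ᶠ z in 𝓝 0, q z = 0 → φ z = 0 := by
  obtain ⟨e, he⟩ : ∃ e, fderiv ℂ q 0 e ≠ 0 := by
    by_contra! h
    exact hdq (ContinuousLinearMap.ext h)
  have hstrict := hq.hasStrictFDerivAt
  have hene : e ≠ 0 := fun h => he (by simp [h])
  -- injectivity of `q` along the direction `e`
  have hinj : ∀ᶠ p : (Fin n → ℂ) × ℂ in 𝓝 (0, 0), q (p.1 + p.2 • e) = q p.1 → p.2 = 0 := by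
    have hc : 0 < ‖fderiv ℂ q 0 e‖ / (2 * ‖e‖) := by positivity
    have h1 := (hasStrictFDerivAt_iff_isLittleO.1 hstrict).def hc
    have ht : Tendsto (fun p : (Fin n → ℂ) × ℂ => (p.1 + p.2 • e, p.1)) (𝓝 (0, 0))
        (𝓝 ((0 : Fin n → ℂ), (0 : Fin n → ℂ))) := by
      have : Continuous (fun p : (Fin n → ℂ) × ℂ => (p.1 + p.2 • e, p.1)) := by fun_prop
      simpa using this.tendsto ((0 : Fin n → ℂ), (0 : ℂ))
    filter_upwards [ht.eventually h1] with p hp heq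
    by_contra hne
    simp only [add_sub_cancel_left, heq, sub_self, map_smul, zero_sub, norm_neg, norm_smul] at hp
    have h2 : 0 < ‖p.2‖ := norm_pos_iff.2 hne
    have h3 : ‖fderiv ℂ q 0 e‖ / (2 * ‖e‖) * (‖p.2‖ * ‖e‖) = ‖p.2‖ * ‖fderiv ℂ q 0 e‖ / 2 := by
      field_simp
    have h4 : 0 < ‖p.2‖ * ‖fderiv ℂ q 0 e‖ := by positivity
    rw [h3] at hp
    linarith
  have hall : ∀ᶠ p : (Fin n → ℂ) × ℂ in 𝓝 (0, 0), AnalyticAt ℂ φ (p.1 + p.2 • e) ∧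
      (φ (p.1 + p.2 • e) = 0 → q (p.1 + p.2 • e) = 0) ∧
      (q (p.1 + p.2 • e) = q p.1 → p.2 = 0) := by
    have ht : Tendsto (fun p : (Fin n → ℂ) × ℂ => p.1 + p.2 • e) (𝓝 (0, 0)) (𝓝 0) := by
      have : Continuous (fun p : (Fin n → ℂ) × ℂ => p.1 + p.2 • e) := by fun_prop
      simpa using this.tendsto ((0 : Fin n → ℂ), (0 : ℂ))
    filter_upwards [ht.eventually hφ.eventually_analyticAt, ht.eventually hsub, hinj]
      with p h1 h2 h3 using ⟨h1, h2, h3⟩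
  obtain ⟨δ, hδ, hball⟩ := Metric.nhds_basis_closedBall.eventually_iff.1 hall
  rw [← closedBall_prod_same] at hball
  have hq0 : q 0 = 0 := hsub.self_of_nhds hφ0
  have hcmp : ∀ᶠ z in 𝓝 (0 : Fin n → ℂ), ∀ s ∈ sphere (0 : ℂ) δ, ‖φ z‖ < ‖φ (z + s • e)‖ := by
    refine (isCompact_sphere (0 : ℂ) δ).eventually_forall_of_forall_eventually fun s hs => ?_
    have hmem : ((0 : Fin n → ℂ), s) ∈ closedBall (0 : Fin n → ℂ) δ ×ˢ closedBall (0 : ℂ) δ :=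
      ⟨mem_closedBall_self hδ.le, sphere_subset_closedBall hs⟩
    obtain ⟨h1, h2, h3⟩ := hball hmem
    have hs0 : s ≠ 0 := fun h => by simp [h] at hs; linarith
    have hpos : 0 < ‖φ ((0 : Fin n → ℂ) + s • e)‖ := by
      refine norm_pos_iff.2 fun h => hs0 (h3 ?_)
      rw [h2 h, hq0]
    have c1 : ContinuousAt (fun p : (Fin n → ℂ) × ℂ => ‖φ p.1‖) (0, s) :=
      (ContinuousAt.comp (x := ((0 : Fin n → ℂ), s)) hφ.continuousAt continuousAt_fst).norm
    have c2 : ContinuousAt (fun p : (Fin n → ℂ) × ℂ => ‖φ (p.1 + p.2 • e)‖) (0, s) :=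
      (ContinuousAt.comp (x := ((0 : Fin n → ℂ), s))
        (f := fun p : (Fin n → ℂ) × ℂ => p.1 + p.2 • e) h1.continuousAt (by fun_prop)).norm
    exact c1.eventually_lt c2 (by simpa [hφ0] using hpos)
  filter_upwards [hcmp, closedBall_mem_nhds (0 : Fin n → ℂ) hδ] with z hz hzδ hqz
  by_contra hne
  have hb : ∀ s ∈ closedBall (0 : ℂ) δ, AnalyticAt ℂ φ (z + s • e) ∧ φ (z + s • e) ≠ 0 := by
    intro s hs
    have hmem : (z, s) ∈ closedBall (0 : Fin n → ℂ) δ ×ˢ closedBall (0 : ℂ) δ := ⟨hzδ, hs⟩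
    obtain ⟨h1, h2, h3⟩ := hball hmem
    refine ⟨h1, fun h => hne ?_⟩
    have hs0 : s = 0 := h3 (by rw [h2 h, hqz])
    simpa [hs0] using h
  have hd : DifferentiableOn ℂ (fun s : ℂ => (φ (z + s • e))⁻¹) (closedBall 0 δ) := fun s hs =>
    ((DifferentiableAt.comp s (g := φ) (f := fun s : ℂ => z + s • e) (hb s hs).1.differentiableAt
      (by fun_prop)).inv (hb s hs).2).differentiableWithinAt
  obtain ⟨s, hs, hmax⟩ := Complex.exists_mem_frontier_isMaxOn_norm (U := ball (0 : ℂ) δ)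
    isBounded_ball (nonempty_ball.2 hδ) (hd.diffContOnCl_ball subset_rfl)
  rw [frontier_ball _ hδ.ne'] at hs
  have h1 := hmax (subset_closure (mem_ball_self hδ) : (0 : ℂ) ∈ closure (ball 0 δ))
  simp only [Set.mem_ofPred_eq, Function.comp_apply, norm_inv, zero_smul, add_zero] at h1
  have h2 := hz s hs
  have h3 : 0 < ‖φ z‖ := norm_pos_iff.2 hne
  exact absurd h1 (not_le.2 (inv_strictAnti₀ h3 h2))

/-! ### Division by a coordinate -/

section linear
variable {n : ℕ} {F : (Fin n → ℂ) → Fin n → ℂ} {r δ : ℝ} {φ : Fin n → ℂ → ℂ}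

lemma pairing_sub (hA : IsAdmissible F r δ) (hφ : ∀ j, Continuous (φ j))
    {H H' : (Fin n → ℂ) → ℂ} (hH : ContinuousOn H (closedBall 0 r))
    (hH' : ContinuousOn H' (closedBall 0 r)) :
    pairing F r φ (fun z => H z - H' z) = pairing F r φ H - pairing F r φ H' := by
  rw [pairing, pairing, pairing, ← integral_sub (integrableOn_ball (continuousOn_integrand hA hφ hH))
    (integrableOn_ball (continuousOn_integrand hA hφ hH'))]
  refine integral_congr_ae (Eventually.of_forall fun z => ?_)
  simp only
  ring

lemma pairing_const_mul (c : ℂ) (H : (Fin n → ℂ) → ℂ) :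
    pairing F r φ (fun z => c * H z) = c * pairing F r φ H := by
  rw [pairing, pairing, ← integral_const_mul]
  refine integral_congr_ae (Eventually.of_forall fun z => ?_)
  simp only
  ring

lemma pairing_sum (hA : IsAdmissible F r δ) (hφ : ∀ j, Continuous (φ j)) {ι : Type*}
    (s : Finset ι) {H : ι → (Fin n → ℂ) → ℂ} (hH : ∀ i, ContinuousOn (H i) (closedBall 0 r)) :
    pairing F r φ (fun z => ∑ i ∈ s, H i z) = ∑ i ∈ s, pairing F r φ (H i) := by
  simp only [pairing]
  rw [← integral_finsetSum s fun i _ =>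
    (integrableOn_ball (continuousOn_integrand hA hφ (hH i))).integrable]
  refine integral_congr_ae (Eventually.of_forall fun z => ?_)
  simp only [Finset.mul_sum, Finset.sum_mul]

end linear

lemma det_jac_id {n : ℕ} (z : Fin n → ℂ) : (jac (fun z : Fin n → ℂ => z) z).det = 1 := by
  have : jac (fun z : Fin n → ℂ => z) z = 1 := by
    ext m l
    simp [jac, Matrix.one_apply, Pi.single_apply]
  rw [this, Matrix.det_one]

lemma isAdmissible_id {n : ℕ} {r : ℝ} (hr : 0 < r) :
    IsAdmissible (fun z : Fin n → ℂ => z) r r :=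
  ⟨hr, fun _ _ => analyticAt_id, fun _ hz => (mem_sphere_zero_iff_norm.1 hz).ge⟩

lemma isFiniteMapGerm_id (n : ℕ) : IsFiniteMapGerm n (fun z => z) :=
  ⟨analyticAt_id, rfl, eventually_mem_nhdsWithin⟩

lemma psi_sub_psi (b : ContDiffBump (0 : ℂ)) {x : ℂ} (hx : ‖x‖ < b.rIn) (y : ℂ) :
    psi b x y * x * (conj y / (max (‖y‖ ^ 2) (b.rIn ^ 2) : ℝ)) = psi b x y - psi b 0 y := by
  rcases lt_or_ge ‖y‖ b.rIn with h | h
  · simp [psi, dbar_bump_of_lt b h]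
  · have h0 : y ≠ 0 := norm_pos_iff.1 (b.rIn_pos.trans_le h)
    have hxy : y - x ≠ 0 := sub_ne_zero.2 fun e => by rw [e] at h; linarith
    have hmax : max (‖y‖ ^ 2) (b.rIn ^ 2) = ‖y‖ ^ 2 :=
      max_eq_left (pow_le_pow_left₀ b.rIn_pos.le h 2)
    have hinv : conj y / ((‖y‖ ^ 2 : ℝ) : ℂ) = y⁻¹ := by
      rw [Complex.inv_def, Complex.normSq_eq_norm_sq, div_eq_mul_inv, ofReal_inv]
    rw [hmax, hinv, psi, psi]
    field_simp
    ring

/-- A holomorphic germ vanishing on `{z_j = 0}` is divisible by `z_j`. The quotient is read off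
from the residue pairing of the identity map, whose kernel reproduces holomorphic functions. -/
lemma exists_eq_coord_mul {n : ℕ} (j : Fin n) {Γ : (Fin n → ℂ) → ℂ} (hΓ : AnalyticAt ℂ Γ 0)
    (h0 : ∀ᶠ z : Fin n → ℂ in 𝓝 0, z j = 0 → Γ z = 0) :
    ∃ Γ₁ : (Fin n → ℂ) → ℂ, AnalyticAt ℂ Γ₁ 0 ∧ ∀ᶠ z in 𝓝 0, Γ z = z j * Γ₁ z := by
  obtain ⟨r, hr, hball⟩ := Metric.nhds_basis_closedBall.eventually_iff.1
    (hΓ.eventually_analyticAt.and h0)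
  have hA := isAdmissible_id (n := n) hr
  let b : ContDiffBump (0 : ℂ) := ⟨r / 4, r / 2, by linarith, by linarith⟩
  have hb : b.rOut < r := by change r / 2 < r; linarith
  have hIn : b.rIn < r := b.rIn_lt_rOut.trans hb
  have hΓc : ContinuousOn Γ (closedBall 0 r) := fun z hz =>
    (hball hz).1.continuousAt.continuousWithinAt
  let g : ℂ → ℂ := fun y => conj y / (max (‖y‖ ^ 2) (b.rIn ^ 2) : ℝ)
  have hg : Continuous g := by
    refine continuous_conj.div (continuous_ofReal.comp (by fun_prop)) fun y => ?_
    have : 0 < max (‖y‖ ^ 2) (b.rIn ^ 2) := lt_max_of_lt_right (pow_pos b.rIn_pos 2)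
    exact_mod_cast this.ne'
  let P : (Fin n → ℂ) → ((Fin n → ℂ) → ℂ) → ℂ := fun x H =>
    pairing (fun z => z) r (fun j => psi b (x j)) H
  have hH₁ : ContinuousOn (fun z => Γ z * g (z j)) (closedBall 0 r) :=
    hΓc.mul (hg.comp (continuous_apply j)).continuousOn
  have hS := analyticAt_pairing hA hb hH₁
  have hT := analyticAt_pairing (H := fun _ => (1 : ℂ)) hA hb continuousOn_const
  have hT0 : P 0 (fun _ => 1) ≠ 0 := by
    have := pairing_det_ne_zero (isFiniteMapGerm_id n) hA hb
    simpa only [det_jac_id] using this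
  have hψ : ∀ {x : Fin n → ℂ}, ‖x‖ < b.rIn → ∀ i, Continuous (psi b (x i)) := fun hx i =>
    (isKernel_psi b ((norm_le_pi_norm _ i).trans_lt hx)).1.continuous
  have hrep : ∀ x : Fin n → ℂ, ‖x‖ < b.rIn → P x Γ = Γ x * P x (fun _ => 1) := by
    intro x hx
    have h1 := pairing_eq_zero (H := fun z => Γ z - Γ x * 1) hA hb
      (fun z hz => (hball hz).1.sub analyticAt_const) hx (fun z _ hz => by simp [hz])
    simp only [det_jac_id, mul_one (_ - _)] at h1
    rw [pairing_sub hA (hψ hx) hΓc continuousOn_const, pairing_const_mul, sub_eq_zero] at h1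
    exact h1
  refine ⟨fun x => P x (fun z => Γ z * g (z j)) / P x (fun _ => 1), hS.div hT hT0, ?_⟩
  filter_upwards [hT.continuousAt.eventually_ne hT0, ball_mem_nhds (0 : Fin n → ℂ) b.rIn_pos]
    with x hTx hx
  have hx : ‖x‖ < b.rIn := mem_ball_zero_iff.1 hx
  have hTx : P x (fun _ => 1) ≠ 0 := hTx
  set x' := Function.update x j 0 with hx'def
  have hx' : ‖x'‖ < b.rIn := by
    refine lt_of_le_of_lt ((pi_norm_le_iff_of_nonneg (norm_nonneg x)).2 fun i => ?_) hx
    by_cases h : i = j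
    · subst h; simp [hx'def]
    · simpa [hx'def, h] using norm_le_pi_norm x i
  have hΓx' : Γ x' = 0 := (hball (mem_closedBall_zero_iff.2 (hx'.trans hIn).le)).2 (by simp [hx'def])
  have hkey : x j * P x (fun z => Γ z * g (z j)) = P x Γ - P x' Γ := by
    simp only [P, pairing]
    rw [← integral_const_mul, ← integral_sub
      (integrableOn_ball (continuousOn_integrand hA (hψ hx) hΓc))
      (integrableOn_ball (continuousOn_integrand hA (hψ hx') hΓc))]
    refine integral_congr_ae (Eventually.of_forall fun z => ?_)
    have e1 : ∏ i ∈ Finset.univ.erase j, psi b (x' i) (z i) =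
        ∏ i ∈ Finset.univ.erase j, psi b (x i) (z i) :=
      Finset.prod_congr rfl fun i hi => by
        rw [hx'def, Function.update_of_ne (Finset.ne_of_mem_erase hi)]
    have e2 := psi_sub_psi b ((norm_le_pi_norm x j).trans_lt hx) (z j)
    have e3 : x' j = 0 := by simp [hx'def]
    simp only
    rw [← Finset.mul_prod_erase _ _ (Finset.mem_univ j),
      ← Finset.mul_prod_erase _ (fun i => psi b (x' i) (z i)) (Finset.mem_univ j), e1, e3]
    linear_combination (∏ i ∈ Finset.univ.erase j, psi b (x i) (z i)) * Γ z *
      conj (jac (fun z => z) z).det * e2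
  rw [hrep x hx, hrep x' hx', hΓx', zero_mul, sub_zero] at hkey
  change Γ x = x j * (P x (fun z => Γ z * g (z j)) / P x (fun _ => 1))
  rw [← mul_div_assoc, hkey, mul_div_cancel_right₀ _ hTx]

lemma analyticAt_coord {n : ℕ} (j : Fin n) (x : Fin n → ℂ) :
    AnalyticAt ℂ (fun z : Fin n → ℂ => z j) x :=
  (ContinuousLinearMap.proj (R := ℂ) (φ := fun _ : Fin n => ℂ) j).analyticAt _

lemma hasFDerivAt_coord {n : ℕ} (j : Fin n) (x : Fin n → ℂ) :
    HasFDerivAt (fun z : Fin n → ℂ => z j)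
      (ContinuousLinearMap.proj (R := ℂ) (φ := fun _ : Fin n => ℂ) j) x :=
  (ContinuousLinearMap.proj (R := ℂ) (φ := fun _ : Fin n => ℂ) j).hasFDerivAt

lemma eventually_line {E : Type*} [NormedAddCommGroup E] [NormedSpace ℂ E] {P : E → Prop}
    (e : E) (hP : ∀ᶠ z in 𝓝 0, P z) : ∀ᶠ s : ℂ in 𝓝 0, P (s • e) := by
  have h1 : Continuous fun s : ℂ => s • e := by fun_prop
  have h2 : Tendsto (fun s : ℂ => s • e) (𝓝 0) (𝓝 0) := by simpa using h1.tendsto 0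
  exact h2.eventually hP

lemma analyticAt_line {E : Type*} [NormedAddCommGroup E] [NormedSpace ℂ E] {f : E → ℂ}
    (e : E) (hf : AnalyticAt ℂ f 0) : AnalyticAt ℂ (fun s : ℂ => f (s • e)) 0 := by
  have h1 : AnalyticAt ℂ (fun s : ℂ => s • e) 0 :=
    (ContinuousLinearMap.toSpanSingleton ℂ e).analyticAt 0
  exact AnalyticAt.comp (g := f) (f := fun s : ℂ => s • e) (by simpa using hf) h1

/-- A germ vanishing at the origin and whose zeros lie in `{z_j = 0}` is a power of `z_j` times
a unit. -/
lemma exists_eq_coord_pow_mul {n : ℕ} (j : Fin n) {Γ : (Fin n → ℂ) → ℂ} (hΓ : AnalyticAt ℂ Γ 0)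
    (h : ∀ᶠ z : Fin n → ℂ in 𝓝 0, Γ z = 0 → z j = 0) :
    ∃ (k : ℕ) (u : (Fin n → ℂ) → ℂ), AnalyticAt ℂ u 0 ∧ u 0 ≠ 0 ∧
      ∀ᶠ z in 𝓝 0, Γ z = z j ^ k * u z := by
  by_contra! hcon
  have hP : ∀ N : ℕ, ∃ u : (Fin n → ℂ) → ℂ, AnalyticAt ℂ u 0 ∧
      (∀ᶠ z in 𝓝 0, Γ z = z j ^ N * u z) ∧ ∀ᶠ z in 𝓝 0, u z = 0 → z j = 0 := by
    intro N
    induction N with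
    | zero => exact ⟨Γ, hΓ, by simp, h⟩
    | succ N ih =>
      obtain ⟨u, hu, hΓu, huj⟩ := ih
      have hu0 : u 0 = 0 := by
        by_contra hne
        exact hcon N u hu hne (hΓu.mono fun z hz => not_not.2 hz)
      have hdq : fderiv ℂ (fun z : Fin n → ℂ => z j) 0 ≠ 0 := by
        intro hz
        have := DFunLike.congr_fun hz (Pi.single j 1)
        simp [(hasFDerivAt_coord j 0).fderiv] at this
      obtain ⟨u₁, hu₁, he⟩ := exists_eq_coord_mul j hu
        (zero_of_zero_of_submersion hu (analyticAt_coord j 0) hu0 huj hdq)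
      refine ⟨u₁, hu₁, ?_, ?_⟩
      · filter_upwards [hΓu, he] with z h1 h2
        rw [h1, h2]
        ring
      · filter_upwards [huj, he] with z h1 h2 h3
        exact h1 (by rw [h2, h3, mul_zero])
  have htop : analyticOrderAt (fun s : ℂ => Γ (s • Pi.single j (1 : ℂ))) 0 = ⊤ := by
    refine ENat.eq_top_iff_forall_ge.2 fun N => ?_
    rw [natCast_le_analyticOrderAt (analyticAt_line _ hΓ)]
    obtain ⟨u, hu, hΓu, -⟩ := hP N
    refine ⟨_, analyticAt_line (Pi.single j (1 : ℂ)) hu, ?_⟩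
    filter_upwards [eventually_line (Pi.single j (1 : ℂ)) hΓu] with s hs
    simpa using hs
  have hz := (analyticOrderAt_eq_top.1 htop).and (eventually_line (Pi.single j (1 : ℂ)) h)
  obtain ⟨s, hs, hne⟩ := ((hz.filter_mono nhdsWithin_le_nhds).and
    (eventually_mem_nhdsWithin (a := (0 : ℂ)) (s := {0}ᶜ))).exists
  exact hne (by simpa using hs.2 hs.1)

/-- The field `z_j ∂_j` is logarithmic along `{Γ = 0} = {z_j = 0}`, and the logarithmic
derivative of `Γ` along it is a unit: it takes the multiplicity of `Γ` as value at `0`. -/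
lemma exists_log_derivative {n : ℕ} (j : Fin n) {Γ : (Fin n → ℂ) → ℂ} (hΓ : AnalyticAt ℂ Γ 0)
    (hΓ0 : Γ 0 = 0) (h : ∀ᶠ z : Fin n → ℂ in 𝓝 0, Γ z = 0 → z j = 0) :
    ∃ v : (Fin n → ℂ) → ℂ, AnalyticAt ℂ v 0 ∧ v 0 ≠ 0 ∧
      ∀ᶠ z in 𝓝 0, z j * fderiv ℂ Γ z (Pi.single j 1) = v z * Γ z := by
  obtain ⟨k, u, hu, hu0, hΓu⟩ := exists_eq_coord_pow_mul j hΓ h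
  have hk : k ≠ 0 := by
    rintro rfl
    have := hΓu.self_of_nhds
    simp only [pow_zero, one_mul, hΓ0] at this
    exact hu0 this.symm
  have hdu : AnalyticAt ℂ (fun z => fderiv ℂ u z (Pi.single j 1)) 0 :=
    ((ContinuousLinearMap.apply ℂ ℂ (Pi.single j (1 : ℂ) : Fin n → ℂ)).analyticAt _).comp hu.fderiv
  refine ⟨fun z => k + z j * fderiv ℂ u z (Pi.single j 1) / u z,
    analyticAt_const.add (((analyticAt_coord j 0).mul hdu).div hu hu0), by simpa using hk, ?_⟩
  filter_upwards [hΓu.eventually_nhds, hu.eventually_analyticAt,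
    hu.continuousAt.eventually_ne hu0] with z h1 h2 h3
  have hd : HasFDerivAt (fun z : Fin n → ℂ => z j ^ k * u z) _ z :=
    ((hasFDerivAt_coord j z).pow k).mul h2.differentiableAt.hasFDerivAt
  rw [EventuallyEq.fderiv_eq h1, hd.fderiv, h1.self_of_nhds]
  obtain ⟨m, rfl⟩ := Nat.exists_eq_succ_of_ne_zero hk
  simp
  field_simp
  ring

/-! ### Pushing forward the logarithmic field -/

/-- An analytic germ vanishing to every order is zero. -/
lemma eventually_eq_zero_of_isBigO {n : ℕ} {g : (Fin n → ℂ) → ℂ} (hg : AnalyticAt ℂ g 0)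
    (h : ∀ m : ℕ, g =O[𝓝 0] fun x : Fin n → ℂ => ‖x‖ ^ m) : ∀ᶠ z in 𝓝 0, g z = 0 := by
  obtain ⟨p, hp⟩ := hg
  have hp0 : ∀ m : ℕ, ∀ y, p m (fun _ => y) = 0 := by
    intro m
    induction m using Nat.strong_induction_on with
    | _ m ih =>
      refine Asymptotics.IsBigO.continuousMultilinearMap_apply_eq_zero ?_
      have h1 := hp.isBigO_sub_partialSum_pow (m + 1)
      have h2 := (h (m + 1)).sub h1
      refine h2.congr_left fun y => ?_
      rw [zero_add, sub_sub_cancel, FormalMultilinearSeries.partialSum, Finset.sum_range_succ,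
        Finset.sum_eq_zero fun k hk => ih k (Finset.mem_range.1 hk) y, zero_add]
  filter_upwards [hp.eventually_hasSum] with y hy
  simp only [hp0, zero_add] at hy
  exact hy.unique hasSum_zero

/-- If `F⁻¹{g = 0}` is the hyperplane `{z_j = 0}`, averaging the field `z_j ∂_j` over the fibres
of `F` gives a field `h` and a unit `θ` with `h(g) = θ g` and `h = 0` on `{g = 0}`. -/
lemma exists_field {n : ℕ} {F : (Fin n → ℂ) → Fin n → ℂ} {g : (Fin n → ℂ) → ℂ}
    (hF : IsFiniteMapGerm n F) (hg : AnalyticAt ℂ g 0) (hg0 : g 0 = 0) (j : Fin n)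
    (hZ : ∀ᶠ z : Fin n → ℂ in 𝓝 0, z j = 0 ↔ g (F z) = 0) :
    ∃ (h : Fin n → (Fin n → ℂ) → ℂ) (θ : (Fin n → ℂ) → ℂ), (∀ i, AnalyticAt ℂ (h i) 0) ∧
      AnalyticAt ℂ θ 0 ∧ θ 0 ≠ 0 ∧
      (∀ᶠ x in 𝓝 0, ∑ i, fderiv ℂ g x (Pi.single i 1) * h i x = g x * θ x) ∧
      ∀ᶠ x in 𝓝 0, g x = 0 → ∀ i, h i x = 0 := by
  have hgF : AnalyticAt ℂ g (F 0) := by rwa [hF.2.1]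
  obtain ⟨v, hv, hv0, hlog⟩ := exists_log_derivative j (Γ := fun z => g (F z))
    (hgF.comp hF.1) (by simp only [hF.2.1, hg0]) (hZ.mono fun z hz => hz.2)
  have hgev : ∀ᶠ z in 𝓝 0, AnalyticAt ℂ g (F z) :=
    hF.1.continuousAt.eventually (hF.2.1.symm ▸ hg.eventually_analyticAt)
  obtain ⟨r, hr, hball⟩ := exists_radius hF (hZ.and (hlog.and (hgev.and hv.eventually_analyticAt)))
  obtain ⟨δ, hδ, hsph⟩ := exists_sphere_bound hr (fun z hz => (hball z hz).1)
    (fun z hz => (hball z hz).2.2)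
  have hA : IsAdmissible F r δ := ⟨hr, fun z hz => (hball z hz).1, hsph⟩
  let b : ContDiffBump (0 : ℂ) := ⟨δ / 4, δ / 2, by linarith, by linarith⟩
  have hb : b.rOut < δ := by change δ / 2 < δ; linarith
  have hHan : ∀ i, ∀ z ∈ closedBall (0 : Fin n → ℂ) r,
      AnalyticAt ℂ (fun z => z j * jac F z i j) z := fun i z hz =>
    (analyticAt_coord j z).mul
      ((analyticAt_pi_iff.1 (analyticAt_jac_row (hA.an z hz) i)) j)
  have hvan : ∀ z ∈ closedBall (0 : Fin n → ℂ) r, AnalyticAt ℂ v z := fun z hz =>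
    (hball z hz).2.1.2.2.2
  have hHc : ∀ i, ContinuousOn (fun z => z j * jac F z i j * (jac F z).det) (closedBall 0 r) :=
    fun i => ContinuousOn.mul (fun z hz => (hHan i z hz).continuousAt.continuousWithinAt)
      (continuousOn_det hA)
  have hvc : ContinuousOn (fun z => v z * (jac F z).det) (closedBall 0 r) :=
    ContinuousOn.mul (fun z hz => (hvan z hz).continuousAt.continuousWithinAt)
      (continuousOn_det hA)
  have hψ : ∀ {x : Fin n → ℂ}, ‖x‖ < b.rIn → ∀ i, Continuous (psi b (x i)) := fun hx i =>
    (isKernel_psi b ((norm_le_pi_norm _ i).trans_lt hx)).1.continuous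
  have hnear : ∀ᶠ x : Fin n → ℂ in 𝓝 0, ‖x‖ < b.rIn := by
    filter_upwards [ball_mem_nhds (0 : Fin n → ℂ) b.rIn_pos] with x hx
      using mem_ball_zero_iff.1 hx
  refine ⟨fun i x => pairing F r (fun l => psi b (x l)) fun z => z j * jac F z i j * (jac F z).det,
    fun x => pairing F r (fun l => psi b (x l)) fun z => v z * (jac F z).det,
    fun i => analyticAt_pairing hA hb (hHc i), analyticAt_pairing hA hb hvc, ?_, ?_, ?_⟩
  · have hx0 : ‖(0 : Fin n → ℂ)‖ < b.rIn := by simpa using b.rIn_pos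
    have h1 := pairing_eq_zero (H := fun z => v z - v 0) hA hb
      (fun z hz => (hvan z hz).sub analyticAt_const) hx0 fun z hz hFz => by
        by_cases h : z = 0
        · rw [h, sub_self]
        · exact absurd hFz ((hball z hz).2.2 h)
    have hcc : ContinuousOn (fun z => v 0 * (jac F z).det) (closedBall 0 r) :=
      continuousOn_const.mul (continuousOn_det hA)
    simp only [sub_mul] at h1
    rw [pairing_sub hA (hψ hx0) hvc hcc,
      pairing_const_mul, sub_eq_zero] at h1
    simp only
    rw [h1]
    exact mul_ne_zero hv0 (pairing_det_ne_zero hF hA hb)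
  · filter_upwards [hnear] with x hx
    have h1 := pairing_eq_zero (x := x)
      (H := fun z => ∑ i, fderiv ℂ g x (Pi.single i 1) * (z j * jac F z i j) - g x * v z) hA hb
      (fun z hz => (Finset.analyticAt_fun_sum _ fun i _ =>
        analyticAt_const.mul (hHan i z hz)).sub (analyticAt_const.mul (hvan z hz))) hx
      fun z hz hFz => by
        have hl := (hball z hz).2.1.2.1
        have hc : fderiv ℂ (fun z => g (F z)) z =
            (fderiv ℂ g (F z)).comp (fderiv ℂ F z) :=
          fderiv_comp z (hball z hz).2.1.2.2.1.differentiableAt (hA.an z hz).differentiableAt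
        have hsum : fderiv ℂ F z (Pi.single j 1) =
            ∑ i, jac F z i j • (Pi.single i (1 : ℂ) : Fin n → ℂ) := by
          ext m
          simp [jac, Finset.sum_apply, Pi.single_apply]
        rw [hc, ContinuousLinearMap.comp_apply, hsum, map_sum, hFz, Finset.mul_sum] at hl
        rw [sub_eq_zero, mul_comm (g x), ← hl]
        refine Finset.sum_congr rfl fun i _ => ?_
        rw [map_smul, smul_eq_mul]
        ring
    have h2 : (fun z => (∑ i, fderiv ℂ g x (Pi.single i 1) * (z j * jac F z i j) - g x * v z) *
        (jac F z).det) = fun z => (∑ i, fderiv ℂ g x (Pi.single i 1) *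
          (z j * jac F z i j * (jac F z).det)) - g x * (v z * (jac F z).det) := by
      funext z
      rw [sub_mul, Finset.sum_mul]
      congr 1
      · exact Finset.sum_congr rfl fun i _ => by ring
      · ring
    have hc1 : ∀ i, ContinuousOn (fun z => fderiv ℂ g x (Pi.single i 1) *
        (z j * jac F z i j * (jac F z).det)) (closedBall 0 r) := fun i =>
      continuousOn_const.mul (hHc i)
    have hc2 : ContinuousOn (fun z => g x * (v z * (jac F z).det)) (closedBall 0 r) :=
      continuousOn_const.mul hvc
    rw [h2, pairing_sub hA (hψ hx) (continuousOn_finsetSum _ fun i _ => hc1 i) hc2,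
      pairing_sum hA (hψ hx) _ hc1, pairing_const_mul, sub_eq_zero] at h1
    simpa only [pairing_const_mul] using h1
  · filter_upwards [hnear] with x hx hgx i
    refine pairing_eq_zero hA hb (hHan i) hx fun z hz hFz => ?_
    rw [(hball z hz).2.1.1.2 (by rw [hFz, hgx]), zero_mul]

/-- A germ `g` with `h(g) = θ g`, `θ` a unit, vanishes identically if the coefficients of the
field `h` vanish to second order: by Cauchy's estimates the order of vanishing of `g` would
increase indefinitely. -/
lemma eventually_eq_zero_of_field {n : ℕ} {g θ : (Fin n → ℂ) → ℂ} {h : Fin n → (Fin n → ℂ) → ℂ}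
    (hg : AnalyticAt ℂ g 0) (hh : ∀ i, AnalyticAt ℂ (h i) 0)
    (hh0 : ∀ i, h i 0 = 0) (hdh : ∀ i, fderiv ℂ (h i) 0 = 0) (hθ : AnalyticAt ℂ θ 0)
    (hθ0 : θ 0 ≠ 0)
    (heq : ∀ᶠ x in 𝓝 0, ∑ i, fderiv ℂ g x (Pi.single i 1) * h i x = g x * θ x) :
    ∀ᶠ z in 𝓝 0, g z = 0 := by
  have hquad : ∀ i, h i =O[𝓝 0] fun x : Fin n → ℂ => ‖x‖ ^ 2 := by
    intro i
    obtain ⟨p, hp⟩ := hh i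
    refine (hp.isBigO_sub_partialSum_pow 2).congr_left fun y => ?_
    have h0 : p 0 (fun _ => y) = 0 := by rw [hp.coeff_zero, hh0]
    have h1 : p 1 (fun _ => y) = 0 := by
      have := DFunLike.congr_fun hp.hasFDerivAt.fderiv y
      rw [hdh] at this
      have hy : (fun _ : Fin 1 => y) = ![y] := by
        funext k
        fin_cases k
        rfl
      rw [hy]
      simpa using this.symm
    simp [FormalMultilinearSeries.partialSum, Finset.sum_range_succ, h0, h1]
  have hgrad : ∀ m : ℕ, g =O[𝓝 0] (fun x : Fin n → ℂ => ‖x‖ ^ m) → ∀ i,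
      (fun x => fderiv ℂ g x (Pi.single i 1) * ‖x‖) =O[𝓝 0] fun x : Fin n → ℂ => ‖x‖ ^ m := by
    intro m hm i
    obtain ⟨C, hC0, hC⟩ := hm.exists_pos
    obtain ⟨ρ, hρ, hball⟩ := Metric.nhds_basis_closedBall.eventually_iff.1
      (hC.bound.and hg.eventually_analyticAt)
    refine Asymptotics.IsBigO.of_bound (C * 2 ^ m) ?_
    filter_upwards [closedBall_mem_nhds (0 : Fin n → ℂ) (half_pos hρ)] with x hx
    have hx : ‖x‖ ≤ ρ / 2 := mem_closedBall_zero_iff.1 hx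
    rcases eq_or_ne x 0 with rfl | hne
    · simp only [norm_zero, ofReal_zero, mul_zero]
      positivity
    have hpos : 0 < ‖x‖ := norm_pos_iff.2 hne
    have hnorm : ∀ s ∈ closedBall (0 : ℂ) ‖x‖,
        ‖x + s • (Pi.single i (1 : ℂ) : Fin n → ℂ)‖ ≤ 2 * ‖x‖ := by
      intro s hs
      have h1 := norm_add_le x (s • (Pi.single i (1 : ℂ) : Fin n → ℂ))
      have h2 : ‖(Pi.single i (1 : ℂ) : Fin n → ℂ)‖ = 1 := by
        rw [Pi.norm_single, norm_one]
      rw [norm_smul, h2, mul_one] at h1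
      linarith [mem_closedBall_zero_iff.1 hs]
    have hin : ∀ s ∈ closedBall (0 : ℂ) ‖x‖,
        x + s • (Pi.single i (1 : ℂ) : Fin n → ℂ) ∈ closedBall (0 : Fin n → ℂ) ρ := fun s hs =>
      mem_closedBall_zero_iff.2 ((hnorm s hs).trans (by linarith))
    have hder : ∀ s ∈ closedBall (0 : ℂ) ‖x‖,
        HasDerivAt (fun s : ℂ => g (x + s • (Pi.single i (1 : ℂ) : Fin n → ℂ)))
          (fderiv ℂ g (x + s • (Pi.single i (1 : ℂ) : Fin n → ℂ)) (Pi.single i 1)) s := by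
      intro s hs
      refine HasFDerivAt.comp_hasDerivAt s (hball (hin s hs)).2.differentiableAt.hasFDerivAt ?_
      simpa using ((hasDerivAt_id s).smul_const (Pi.single i (1 : ℂ) : Fin n → ℂ)).const_add x
    have h1 := Complex.norm_deriv_le_of_forall_mem_sphere_norm_le (C := C * (2 * ‖x‖) ^ m) hpos
      (DifferentiableOn.diffContOnCl_ball (U := closedBall 0 ‖x‖)
        (fun s hs => (hder s hs).differentiableAt.differentiableWithinAt) subset_rfl)
      (fun s hs => by
        have h2 := (hball (hin s (sphere_subset_closedBall hs))).1
        rw [norm_pow, norm_norm] at h2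
        exact h2.trans (mul_le_mul_of_nonneg_left
          (pow_le_pow_left₀ (norm_nonneg _) (hnorm s (sphere_subset_closedBall hs)) m) hC0.le))
    rw [(hder 0 (mem_closedBall_self hpos.le)).deriv, zero_smul, add_zero, le_div_iff₀ hpos] at h1
    rw [norm_mul, Complex.norm_real, norm_norm, norm_pow, norm_norm]
    calc _ ≤ C * (2 * ‖x‖) ^ m := h1
      _ = _ := by ring
  have hstep : ∀ m : ℕ, g =O[𝓝 0] fun x : Fin n → ℂ => ‖x‖ ^ m := by
    intro m
    induction m with
    | zero => simpa using hg.continuousAt.isBigO_one ℝ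
    | succ m ih =>
      have h1 : (fun x => g x * θ x) =O[𝓝 0] fun x : Fin n → ℂ => ‖x‖ ^ (m + 1) := by
        refine Asymptotics.IsBigO.congr' (f₁ := fun x => ∑ i, fderiv ℂ g x (Pi.single i 1) * h i x)
          ?_ heq EventuallyEq.rfl
        refine Asymptotics.IsBigO.fun_sum fun i _ => ?_
        have h2 := (hgrad m ih i).mul (hquad i)
        obtain ⟨C, hC⟩ := h2.bound
        refine Asymptotics.IsBigO.of_bound C ?_
        filter_upwards [hC] with x hx
        rcases eq_or_ne x 0 with rfl | hne
        · simp [hh0]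
        · have hpos : 0 < ‖x‖ := norm_pos_iff.2 hne
          simp only [norm_mul, norm_pow, norm_norm, Complex.norm_real] at hx ⊢
          refine le_of_mul_le_mul_right ?_ hpos
          calc _ = ‖fderiv ℂ g x (Pi.single i 1)‖ * ‖x‖ * ‖h i x‖ := by ring
            _ ≤ _ := hx
            _ = _ := by ring
      have h3 : (fun x => (θ x)⁻¹) =O[𝓝 0] fun _ : Fin n → ℂ => (1 : ℝ) :=
        (hθ.continuousAt.inv₀ hθ0).isBigO_one ℝ
      refine (h1.mul h3).congr' ?_ (by simp)
      filter_upwards [hθ.continuousAt.eventually_ne hθ0] with x hx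
      rw [mul_assoc, mul_inv_cancel₀ hx, mul_one]
  exact eventually_eq_zero_of_isBigO hg hstep

/-- The case in which `F⁻¹{g = 0}` is a coordinate hyperplane. -/
lemma smooth_of_pullback_hyperplane {n : ℕ} {F : (Fin n → ℂ) → Fin n → ℂ}
    {g : (Fin n → ℂ) → ℂ} (hF : IsFiniteMapGerm n F) (hg : AnalyticAt ℂ g 0) (hg0 : g 0 = 0)
    (hgne : ¬ ∀ᶠ z in 𝓝 (0 : Fin n → ℂ), g z = 0) (j : Fin n)
    (hZ : ∀ᶠ z : Fin n → ℂ in 𝓝 0, z j = 0 ↔ g (F z) = 0) : IsSmoothGermZeroSet n g := by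
  obtain ⟨h, θ, hh, hθ, hθ0, heq, hzero⟩ := exists_field hF hg hg0 j hZ
  have hh0 : ∀ i, h i 0 = 0 := hzero.self_of_nhds hg0
  obtain ⟨i, hi⟩ : ∃ i, fderiv ℂ (h i) 0 ≠ 0 := by
    by_contra! hdh
    exact hgne (eventually_eq_zero_of_field hg hh hh0 hdh hθ hθ0 heq)
  refine ⟨h i, hh i, hh0 i, ?_, hi⟩
  filter_upwards [hzero, zero_of_zero_of_submersion hg (hh i) hg0
    (hzero.mono fun z hz hgz => hz hgz i) hi] with z h1 h2
  exact ⟨h2, fun hz => h1 hz i⟩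

/-- A submersive germ becomes a coordinate function after a local biholomorphism. -/
lemma exists_straightening {n : ℕ} {p : (Fin n → ℂ) → ℂ} (hp : AnalyticAt ℂ p 0) (hp0 : p 0 = 0)
    (hdp : fderiv ℂ p 0 ≠ 0) :
    ∃ (j : Fin n) (Φ : (Fin n → ℂ) → Fin n → ℂ), AnalyticAt ℂ Φ 0 ∧ Φ 0 = 0 ∧
      (∀ᶠ z in 𝓝 0, p (Φ z) = z j) ∧ ∀ᶠ z in 𝓝 0, Φ z = 0 → z = 0 := by
  obtain ⟨j, hj⟩ : ∃ j, fderiv ℂ p 0 (Pi.single j 1) ≠ 0 := by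
    by_contra! hcon
    refine hdp (ContinuousLinearMap.ext fun w => ?_)
    have hw : w = ∑ i, w i • (Pi.single i (1 : ℂ) : Fin n → ℂ) := by
      ext m
      simp [Finset.sum_apply, Pi.single_apply]
    rw [hw, map_sum]
    simp [hcon]
  let Ψ : (Fin n → ℂ) → Fin n → ℂ := fun z => Function.update z j (p z)
  have hΨ : AnalyticAt ℂ Ψ 0 := by
    refine analyticAt_pi_iff.2 fun i => ?_
    by_cases h : i = j
    · subst h; simpa [Ψ] using hp
    · simpa [Ψ, h] using analyticAt_coord i 0
  have hcomp : ∀ i w, fderiv ℂ Ψ 0 w i = fderiv ℂ (fun z => Ψ z i) 0 w := by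
    intro i w
    have := (hasFDerivAt_pi'.1 hΨ.differentiableAt.hasFDerivAt i).fderiv
    rw [this]
    rfl
  have hinj : Function.Injective (fderiv ℂ Ψ 0 : (Fin n → ℂ) →ₗ[ℂ] Fin n → ℂ) := by
    refine (injective_iff_map_eq_zero _).2 fun w hw => ?_
    have hwi : ∀ i, i ≠ j → w i = 0 := by
      intro i hi
      have h1 := (hcomp i w).symm.trans (congrFun hw i)
      have h2 : (fun z => Ψ z i) = fun z => z i := by
        funext z
        simp [Ψ, hi]
      rw [h2, (hasFDerivAt_coord i 0).fderiv] at h1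
      exact h1
    have hw' : w = w j • (Pi.single j (1 : ℂ) : Fin n → ℂ) := by
      ext i
      by_cases h : i = j
      · subst h; simp
      · simp [h, hwi i h]
    have h1 := (hcomp j w).symm.trans (congrFun hw j)
    have h2 : (fun z => Ψ z j) = p := by
      funext z
      simp [Ψ]
    rw [h2, hw', map_smul, smul_eq_mul] at h1
    have h3 : w j = 0 := (mul_eq_zero.1 h1).resolve_right hj
    rw [hw', h3, zero_smul]
  let L : (Fin n → ℂ) ≃L[ℂ] (Fin n → ℂ) :=
    (LinearEquiv.ofInjectiveEndo (fderiv ℂ Ψ 0 : (Fin n → ℂ) →ₗ[ℂ] Fin n → ℂ)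
      hinj).toContinuousLinearEquiv
  have hL : (L : (Fin n → ℂ) →L[ℂ] Fin n → ℂ) = fderiv ℂ Ψ 0 := by
    ext w
    rfl
  have hstrict : HasStrictFDerivAt Ψ (L : (Fin n → ℂ) →L[ℂ] Fin n → ℂ) 0 := by
    rw [hL]
    exact hΨ.hasStrictFDerivAt
  have hΨ0 : Ψ 0 = 0 := by
    funext i
    by_cases h : i = j
    · subst h; simp [Ψ, hp0]
    · simp [Ψ, h]
  let e := hstrict.toOpenPartialHomeomorph Ψ
  have hsrc : (0 : Fin n → ℂ) ∈ e.source := hstrict.mem_toOpenPartialHomeomorph_source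
  have hright := hstrict.eventually_right_inverse
  have h0 := hstrict.localInverse_apply_image
  have han : AnalyticAt ℂ e.symm (e 0) := e.analyticAt_symm' hsrc hΨ hL.symm
  have he0 : e 0 = 0 := hΨ0
  rw [hΨ0] at hright h0
  rw [he0] at han
  refine ⟨j, e.symm, han, h0, ?_, ?_⟩
  · filter_upwards [hright] with z hz
    have h1 : Ψ (e.symm z) j = p (e.symm z) := Function.update_self _ _ _
    rw [← h1]
    exact congrFun hz j
  · filter_upwards [hright] with z hz hz0
    rw [← hz]
    change Ψ (e.symm z) = 0
    rw [hz0, hΨ0]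

end

/-- **Corollary.** If `(V,0) = {g = 0}` is a hypersurface germ and `F` is a finite
holomorphic map germ such that `(F⁻¹(V),0)` (with its reduced structure) is smooth, then
`(V,0)` is smooth. -/
theorem smooth_of_pullback_smooth (n : ℕ) (F : (Fin n → ℂ) → Fin n → ℂ)
    (g : (Fin n → ℂ) → ℂ) (hF : IsFiniteMapGerm n F)
    (hg : AnalyticAt ℂ g 0) (hg0 : g 0 = 0)
    (hgne : ¬ (∀ᶠ z in 𝓝 (0 : Fin n → ℂ), g z = 0))
    (hsmoothW : IsSmoothGermZeroSet n (fun z => g (F z))) :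
    IsSmoothGermZeroSet n g := by
  obtain ⟨p, hp, hp0, hpz, hdp⟩ := hsmoothW
  obtain ⟨j, Φ, hΦ, hΦ0, hΦp, hΦinj⟩ := exists_straightening hp hp0 hdp
  have hΦt : Tendsto Φ (𝓝 0) (𝓝 0) := by simpa [hΦ0] using hΦ.continuousAt.tendsto
  have hFΦ : IsFiniteMapGerm n (fun z => F (Φ z)) := by
    refine ⟨AnalyticAt.comp (by rw [hΦ0]; exact hF.1) hΦ, by simp only [hΦ0, hF.2.1], ?_⟩
    have h1 := hΦt.eventually (eventually_nhdsWithin_iff.1 hF.2.2)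
    rw [eventually_nhdsWithin_iff]
    filter_upwards [h1, hΦinj] with z h2 h3 h4
    exact h2 fun h => h4 (h3 h)
  refine smooth_of_pullback_hyperplane hFΦ hg hg0 hgne j ?_
  filter_upwards [hΦp, hΦt.eventually hpz] with z h1 h2
  rw [← h1]
  exact h2
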